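/- arXiv:1803.03546 — 6 statements merged into one kernel-verified Lean document; each statement's English description precedes it below -/
import Mathlib

section
/- There exists a constant C > 0 such that for every positive integer n, |∫₀¹ {n x}·log x dx + 1/2 − (log n)/(12 n)| ≤ C/n. In other words, ∫₀¹ {n x} log x dx = −1/2 + (log n)/(12 n) + O(1/n) as n → ∞. -/
open MeasureTheory Real

lemma aux_int (g : ℝ → ℝ) (a b : ℝ) (hg : IntervalIntegrable g volume a b) :
    IntervalIntegrable (fun t => (Int.fract t - 1/2) * g t) volume a b := by
  have hm : Measurable (fun t : ℝ => Int.fract t - 1/2) := measurable_fract.sub_const _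
  have hb : ∀ t : ℝ, ‖Int.fract t - 1/2‖ ≤ 1 := by
    intro t
    rw [Real.norm_eq_abs, abs_le]
    constructor <;> linarith [Int.fract_nonneg t, Int.fract_lt_one t]
  constructor
  · exact hg.1.bdd_mul (c := 1) hm.aestronglyMeasurable (Filter.Eventually.of_forall hb)
  · exact hg.2.bdd_mul (c := 1) hm.aestronglyMeasurable (Filter.Eventually.of_forall hb)

lemma aux_shift (g : ℝ → ℝ) (n : ℕ) :
    ∫ t in (n:ℝ)..(n+1), (Int.fract t - 1/2) * g t = ∫ s in (0:ℝ)..1, (s - 1/2) * g (n + s) := by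
  have h := intervalIntegral.integral_comp_add_left (a := 0) (b := 1)
    (fun t => (Int.fract t - 1/2) * g t) (n:ℝ)
  rw [add_zero] at h
  rw [← h]
  apply intervalIntegral.integral_congr_ae
  have h1 : ∀ᵐ x : ℝ, x ≠ 1 := by simp [ae_iff, measure_singleton]
  filter_upwards [h1] with x hx hm
  rw [Set.uIoc_of_le zero_le_one] at hm
  have : Int.fract ((n:ℝ) + x) = x := by
    rw [Int.fract_natCast_add, Int.fract_eq_self]
    exact ⟨hm.1.le, lt_of_le_of_ne hm.2 hx⟩
  simp only [this]

lemma aux_zero (n : ℕ) : ∫ t in (0:ℝ)..n, (Int.fract t - 1/2) * (1:ℝ) = 0 := by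
  induction n with
  | zero => simp
  | succ k ih =>
    push_cast
    rw [← intervalIntegral.integral_add_adjacent_intervals (b := (k:ℝ))
      (aux_int (fun _ => 1) _ _ (by simp)) (aux_int (fun _ => 1) _ _ (by simp)), ih,
      aux_shift (fun _ => 1)]
    simp

lemma aux_log {u : ℝ} (h0 : 0 ≤ u) : |Real.log (1+u) - u| ≤ u^2 := by
  rw [abs_le]
  have h1 := Real.log_le_sub_one_of_pos (x := 1+u) (by linarith)
  have h2 := Real.one_sub_inv_le_log_of_pos (x := 1+u) (by linarith)
  have h3 : 1 - (1+u)⁻¹ - u ≥ -u^2 := by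
    have : (1+u)⁻¹ = 1 - u + u^2 - u^3/(1+u) := by field_simp; ring
    have h4 : 0 ≤ u^3/(1+u) := by positivity
    linarith
  constructor <;> nlinarith

lemma aux_step (k : ℕ) (hk : 0 < k) :
    |(∫ s in (0:ℝ)..1, (s - 1/2) * Real.log (k + s)) - 1/(12*k)| ≤ 1/(k:ℝ)^2 := by
  have hk' : (0:ℝ) < k := by exact_mod_cast hk
  have e1 : ∫ s in (0:ℝ)..1, (s - 1/2) * (Real.log k + s / k) = 1/(12*k) := by
    have : ∀ s : ℝ, (s - 1/2) * (Real.log k + s / k)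
        = (1/k) * s^2 + (Real.log k - 1/(2*k)) * s - Real.log k / 2 := by
      intro s; field_simp; ring
    simp_rw [this]
    rw [intervalIntegral.integral_sub, intervalIntegral.integral_add,
      intervalIntegral.integral_const_mul, intervalIntegral.integral_const_mul]
    · simp; field_simp; ring
    all_goals exact Continuous.intervalIntegrable (by fun_prop) _ _
  rw [← e1, ← intervalIntegral.integral_sub]
  · have := intervalIntegral.norm_integral_le_of_norm_le_const (a := 0) (b := 1) (C := 1/(k:ℝ)^2)
      (f := fun s => (s - 1/2) * Real.log (k + s) - (s - 1/2) * (Real.log k + s / k)) ?_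
    · simpa using this
    · intro s hs
      rw [Set.uIoc_of_le zero_le_one] at hs
      have hl : Real.log (k+s) = Real.log k + Real.log (1 + s/k) := by
        rw [← Real.log_mul (by positivity) (by have := hs.1; positivity)]
        congr 1; field_simp
      rw [hl, ← mul_sub, norm_mul]
      have a1 : ‖s - 1/2‖ ≤ 1 := by
        rw [Real.norm_eq_abs, abs_le]; constructor <;> linarith [hs.1, hs.2]
      have a2 := aux_log (u := s/k) (div_nonneg hs.1.le hk'.le)
      have a3 : (s/k)^2 ≤ 1/(k:ℝ)^2 := by
        rw [div_pow]; gcongr; nlinarith [hs.1, hs.2]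
      rw [add_sub_add_left_eq_sub, Real.norm_eq_abs, Real.norm_eq_abs]
      rw [Real.norm_eq_abs] at a1
      calc _ ≤ 1 * (1/(k:ℝ)^2) := mul_le_mul a1 (a2.trans a3) (abs_nonneg _) zero_le_one
        _ = _ := one_mul _
  · apply ContinuousOn.intervalIntegrable
    apply ContinuousOn.mul (by fun_prop)
    apply ContinuousOn.log (by fun_prop)
    intro x hx
    rw [Set.uIcc_of_le zero_le_one] at hx
    have := hx.1
    positivity
  · exact Continuous.intervalIntegrable (by fun_prop) _ _

lemma aux_J (n : ℕ) :
    |(∫ t in (0:ℝ)..((n+1:ℕ):ℝ), (Int.fract t - 1/2) * Real.log t) - Real.log (n+1:ℕ) / 12|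
      ≤ |∫ t in (0:ℝ)..1, (Int.fract t - 1/2) * Real.log t| + 4 * (1 - 1/((n+1:ℕ):ℝ)) := by
  induction n with
  | zero => simp
  | succ m ih =>
    have hs := aux_step (m+1) (by omega)
    rw [← aux_shift Real.log (m+1)] at hs
    set k : ℕ := m+1 with hkdef
    have hk : (0:ℝ) < k := by positivity
    have hk1 : (1:ℝ) ≤ k := by simp [hkdef]
    push_cast at ih hs ⊢
    rw [← intervalIntegral.integral_add_adjacent_intervals (b := (k:ℝ))
      (aux_int _ _ _ intervalIntegral.intervalIntegrable_log')
      (aux_int _ _ _ intervalIntegral.intervalIntegrable_log')]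
    have hl : Real.log (k+1) = Real.log k + Real.log (1 + 1/k) := by
      rw [← Real.log_mul (by positivity) (by positivity)]
      congr 1; field_simp
    have a2 := aux_log (u := 1/(k:ℝ)) (by positivity)
    have a3 : 2 * (1/(k:ℝ)^2) ≤ 4 * (1/k - 1/(k+1)) := by
      rw [div_sub_div _ _ (by positivity) (by positivity), mul_one_div, mul_div_assoc',
        div_le_div_iff₀ (by positivity) (by positivity)]
      nlinarith
    have a4 : 1/(12*(k:ℝ)) = (1/k)/12 := by field_simp
    rw [one_div_pow] at a2
    rw [a4] at hs
    rw [hl]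
    have a5 : 0 < 1/(k:ℝ)^2 := by positivity
    rw [abs_le] at ih hs a2 ⊢
    constructor <;> linarith [ih.1, ih.2, hs.1, hs.2, a2.1, a2.2]

/-- `∫₀¹ {n x} log x dx = -1/2 + (log n)/(12 n) + O(1/n)` uniformly in `n`. -/
theorem integral_fract_mul_log_asymp :
    ∃ C > (0 : ℝ), ∀ n : ℕ, 0 < n →
      |(∫ x in Set.Ioc (0 : ℝ) 1, Int.fract (n * x) * Real.log x)
        + 1 / 2 - Real.log n / (12 * n)| ≤ C / n := by
  refine ⟨|∫ t in (0:ℝ)..1, (Int.fract t - 1/2) * Real.log t| + 4, by positivity, ?_⟩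
  intro n hn
  have hn' : (0:ℝ) < n := by exact_mod_cast hn
  obtain ⟨m, rfl⟩ : ∃ m, n = m + 1 := ⟨n - 1, by omega⟩
  have hJ := aux_J m
  set n : ℕ := m + 1
  have hz := aux_zero n
  rw [← intervalIntegral.integral_of_le zero_le_one]
  set J := ∫ t in (0:ℝ)..(n:ℝ), (Int.fract t - 1/2) * Real.log t with hJd
  have hint : IntervalIntegrable
      (fun t => (Int.fract t - 1/2) * (Real.log t - Real.log n)) volume 0 n :=
    aux_int _ _ _ (intervalIntegral.intervalIntegrable_log'.sub (by simp))
  have e1 : ∫ t in (0:ℝ)..n, (Int.fract t - 1/2) * (Real.log t - Real.log n) = J := by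
    have : ∀ t : ℝ, (Int.fract t - 1/2) * (Real.log t - Real.log n)
      = (Int.fract t - 1/2) * Real.log t - Real.log n * ((Int.fract t - 1/2) * 1) := by
      intro t; ring
    simp_rw [this]
    rw [intervalIntegral.integral_sub (aux_int _ _ _ intervalIntegral.intervalIntegrable_log')
      ((aux_int (fun _ => 1) _ _ (by simp)).const_mul _),
      intervalIntegral.integral_const_mul, hz]
    simp [hJd]
  have e2 := intervalIntegral.integral_comp_mul_left (a := 0) (b := 1)
    (fun t => (Int.fract t - 1/2) * (Real.log t - Real.log n)) hn'.ne'
  rw [mul_zero, mul_one, e1, smul_eq_mul] at e2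
  have e3 : ∫ x in (0:ℝ)..1, Int.fract (n * x) * Real.log x
      = ∫ x in (0:ℝ)..1, ((Int.fract (n*x) - 1/2) * (Real.log (n*x) - Real.log n)
          + (1/2) * Real.log x) := by
    apply intervalIntegral.integral_congr_ae
    refine Filter.Eventually.of_forall fun x hx => ?_
    rw [Set.uIoc_of_le zero_le_one] at hx
    rw [Real.log_mul hn'.ne' hx.1.ne']
    ring
  have hint2 : IntervalIntegrable
      (fun x => (Int.fract (n*x) - 1/2) * (Real.log (n*x) - Real.log n)) volume 0 1 := by
    have := hint.comp_mul_left (c := (n:ℝ))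
    simpa [hn'.ne'] using this
  rw [e3, intervalIntegral.integral_add hint2
    (intervalIntegral.intervalIntegrable_log'.const_mul _), e2,
    intervalIntegral.integral_const_mul, integral_log]
  have e4 : (n:ℝ)⁻¹ * J + 1/2 * (1 * Real.log 1 - 0 * Real.log 0 - 1 + 0) + 1/2
      - Real.log n / (12 * n) = (J - Real.log n / 12) / n := by
    simp; field_simp
  rw [e4, abs_div, abs_of_pos hn']
  gcongr
  have : 0 < 1/(n:ℝ) := by positivity
  linarith
end

section
/- Fix a positive integer ℓ and set a(ℓ) := ℓ/2 + 2·Σ_{m=1}^{ℓ−1} (m/ℓ)·log(m/ℓ). Then there exists a constant C > 0 such that for all integers n ≥ 2: |Σ_{k=1}^{n−1} (2{ℓ k/n} − 1)·log(k/n) − a(ℓ)·n + (1/2)·log n| ≤ C and |Σ_{k=1}^{n−1} (2{−ℓ k/n} − 1)·log(k/n) + a(ℓ)·n − (1/2)·log n| ≤ C. -/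
open Real Finset

lemma aux_g (n x y : ℝ) (hn : 0 < n) (hx : 0 < x) (hxy : x ≤ y) :
    log (x/n) * (y-x) ≤ (y * log (y/n) - y) - (x * log (x/n) - x) ∧
    (y * log (y/n) - y) - (x * log (x/n) - x) ≤ log (y/n) * (y-x) := by
  have hy : 0 < y := by linarith
  rw [log_div hx.ne' hn.ne', log_div hy.ne' hn.ne']
  have h1 := Real.log_le_sub_one_of_pos (div_pos hy hx)
  have h2 := Real.log_le_sub_one_of_pos (div_pos hx hy)
  rw [log_div hy.ne' hx.ne'] at h1
  rw [log_div hx.ne' hy.ne'] at h2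
  have h1' := mul_le_mul_of_nonneg_left h1 hx.le
  have h2' := mul_le_mul_of_nonneg_left h2 hy.le
  have e1 : x * (y/x - 1) = y - x := by field_simp
  have e2 : y * (x/y - 1) = x - y := by field_simp
  rw [e1] at h1'
  rw [e2] at h2'
  constructor <;> nlinarith

lemma aux_T (n k0 : ℕ) (h0 : 1 ≤ k0) (hk : k0 ≤ n) :
    (∑ k ∈ Ico k0 n, log ((k:ℝ)/n)) ≤ -n - (k0 * log (k0/n) - k0) ∧
    -n - (k0 * log (k0/n) - k0) ≤ (∑ k ∈ Ico k0 n, log ((k:ℝ)/n)) - log (k0/n) := by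
  have hn : (0:ℝ) < n := by exact_mod_cast (by omega : 0 < n)
  have key : ∀ j : ℕ, k0 ≤ j → (∑ k ∈ Ico k0 j, log ((k:ℝ)/n)) ≤ (j * log (j/n) - j) - (k0 * log (k0/n) - k0) ∧
    (j * log (j/n) - j) - (k0 * log (k0/n) - k0) ≤ (∑ k ∈ Ico k0 j, log ((k:ℝ)/n)) + log (j/n) - log (k0/n) := by
    intro j hj
    induction j, hj using Nat.le_induction with
    | base => simp
    | succ j hj ih =>
      rw [sum_Ico_succ_top hj]
      have hj0 : (0:ℝ) < j := by exact_mod_cast (by omega : 0 < j)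
      have := aux_g n j (j+1) hn hj0 (by linarith)
      push_cast
      constructor <;> nlinarith [this.1, this.2, ih.1, ih.2]
  have := key n hk
  rw [div_self hn.ne', log_one] at this
  constructor <;> linarith [this.1, this.2]

lemma aux_Tm (ℓ m n : ℕ) (hm : 1 ≤ m) (hml : m < ℓ) (hn : 2 ≤ n) :
    |(∑ k ∈ Ico 1 n, if m * n ≤ ℓ * k then log ((k:ℝ)/n) else 0) -
      (-n - (m * n / ℓ * log (m/ℓ) - m * n / ℓ))| ≤ 2 * |log ((m:ℝ)/ℓ)| := by
  have hn0 : (0:ℝ) < n := by exact_mod_cast (by omega : 0 < n)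
  have hl0 : (0:ℝ) < ℓ := by exact_mod_cast (by omega : 0 < ℓ)
  have hm0 : (0:ℝ) < m := by exact_mod_cast (by omega : 0 < m)
  set k0 := ⌈(m:ℝ) * n / ℓ⌉₊ with hk0
  have hx : (0:ℝ) < (m:ℝ) * n / ℓ := by positivity
  have h1 : 1 ≤ k0 := Nat.ceil_pos.mpr hx
  have hk : k0 ≤ n := by
    apply Nat.ceil_le.mpr
    rw [div_le_iff₀ hl0]
    have : (m:ℝ) ≤ ℓ := by exact_mod_cast hml.le
    nlinarith
  have hle : (m:ℝ) * n / ℓ ≤ k0 := Nat.le_ceil _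
  have hlt : (k0:ℝ) < (m:ℝ) * n / ℓ + 1 := Nat.ceil_lt_add_one hx.le
  have hs : (∑ k ∈ Ico 1 n, if m * n ≤ ℓ * k then log ((k:ℝ)/n) else 0) = ∑ k ∈ Ico k0 n, log ((k:ℝ)/n) := by
    rw [← sum_filter]
    apply sum_congr _ (fun _ _ => rfl)
    ext k
    have : k0 ≤ k ↔ m * n ≤ ℓ * k := by
      rw [hk0, Nat.ceil_le, div_le_iff₀ hl0, mul_comm (k:ℝ)]
      exact_mod_cast Iff.rfl
    simp only [mem_filter, mem_Ico, ← this]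
    omega
  rw [hs]
  have hT := aux_T n k0 h1 hk
  have hg := aux_g n _ k0 hn0 hx hle
  have e : (m:ℝ) * n / ℓ / n = m / ℓ := by field_simp
  rw [e] at hg
  have hk00 : (0:ℝ) < k0 := by linarith
  have l1 : log ((k0:ℝ)/n) ≤ 0 := by
    apply log_nonpos (by positivity)
    rw [div_le_one hn0]; exact_mod_cast hk
  have l2 : log ((m:ℝ)/ℓ) ≤ log ((k0:ℝ)/n) := by
    apply log_le_log (by positivity)
    rw [← e]; gcongr
  rw [abs_of_nonpos (l2.trans l1), abs_le]
  constructor <;> nlinarith [hT.1, hT.2, hg.1, hg.2]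

lemma aux_B : ∃ C : ℝ, ∀ n : ℕ, 2 ≤ n → |(∑ k ∈ Ico 1 n, log ((k:ℝ)/n)) + n - 1/2 * log n| ≤ C := by
  have ht : Filter.Tendsto (fun n => log (Stirling.stirlingSeq n)) Filter.atTop (nhds (log (√π))) :=
    (Stirling.tendsto_stirlingSeq_sqrt_pi).log (by positivity)
  obtain ⟨M, hM⟩ := ht.bddAbove_range
  obtain ⟨N, hN⟩ := ht.bddBelow_range
  refine ⟨|M| + |N| + |log 2|, fun n hn => ?_⟩
  have h1 : log (Stirling.stirlingSeq n) ≤ M := hM ⟨n, rfl⟩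
  have h2 : N ≤ log (Stirling.stirlingSeq n) := hN ⟨n, rfl⟩
  have hn0 : (0:ℝ) < n := by exact_mod_cast (by omega : 0 < n)
  have e : ∑ k ∈ Ico 1 n, log ((k:ℝ)/n) = log (n.factorial) - n * log n := by
    have hf : ∀ j : ℕ, 1 ≤ j → ∑ k ∈ Ico 1 j, log ((k:ℝ)/n) = log (j.factorial) - log j - (j-1) * log n := by
      intro j hj
      induction j, hj using Nat.le_induction with
      | base => simp
      | succ j hj ih =>
        have hj0 : (0:ℝ) < j := by exact_mod_cast (by omega : 0 < j)
        rw [sum_Ico_succ_top hj, ih, Nat.factorial_succ, log_div hj0.ne' hn0.ne']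
        push_cast
        rw [log_mul (by positivity) (by positivity)]
        ring
    rw [hf n (by omega)]; ring
  rw [Stirling.log_stirlingSeq_formula, log_mul (by norm_num) hn0.ne', log_div hn0.ne' (exp_pos 1).ne', log_exp] at h1 h2
  rw [e, abs_le]
  have := le_abs_self M
  have := neg_abs_le N
  have := abs_nonneg M
  have := abs_nonneg N
  have := le_abs_self (log 2)
  have := neg_abs_le (log 2)
  constructor <;> nlinarith

lemma aux_A (n : ℕ) (hn : 2 ≤ n) :
    |(∑ k ∈ Ico 1 n, (k:ℝ)/n * log ((k:ℝ)/n)) + n/4| ≤ 4 := by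
  have hn0 : (0:ℝ) < n := by exact_mod_cast (by omega : 0 < n)
  have hn1 : (2:ℝ) ≤ n := by exact_mod_cast hn
  have key : ∀ j : ℕ, 1 ≤ j → j ≤ n → 
     (∑ k ∈ Ico 1 j, (k:ℝ) * log ((k:ℝ)/n)) + 1/2 * (∑ k ∈ Ico 1 j, log ((k:ℝ)/n)) ≤ 
       (j^2/2 * log (j/n) - j^2/4) - (1/2 * log (1/n) - 1/4) ∧
     (j^2/2 * log (j/n) - j^2/4) - (1/2 * log (1/n) - 1/4) ≤ 
      (∑ k ∈ Ico 1 j, (k:ℝ) * log ((k:ℝ)/n)) + 5/4 * j := by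
    intro j hj
    induction j, hj using Nat.le_induction with
    | base => intro _; norm_num
    | succ j hj ih =>
      intro hjn
      have ih := ih (by omega)
      have hj1 : (1:ℝ) ≤ j := by exact_mod_cast hj
      have hj0 : (0:ℝ) < j := by linarith
      have hy : (0:ℝ) < j + 1 := by linarith
      have l0 : log ((j:ℝ)/n) ≤ 0 := by
        apply log_nonpos (by positivity)
        rw [div_le_one hn0]; exact_mod_cast (by omega : j ≤ n)
      rw [sum_Ico_succ_top hj, sum_Ico_succ_top hj]
      push_cast
      have e : log (((j:ℝ)+1)/n) = log ((j:ℝ)/n) + log (((j:ℝ)+1)/j) := by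
        rw [← log_mul (by positivity) (by positivity)]; congr 1; field_simp
      have h1 := Real.log_le_sub_one_of_pos (div_pos hy hj0)
      have h2 := Real.one_sub_inv_le_log_of_pos (div_pos hy hj0)
      have h1' := mul_le_mul_of_nonneg_left h1 (by positivity : (0:ℝ) ≤ (j+1)^2/2)
      have h2' := mul_le_mul_of_nonneg_left h2 (by positivity : (0:ℝ) ≤ (j+1)^2/2)
      have e1 : ((j:ℝ)+1)^2/2 * ((j+1)/j - 1) = j/2 + 1 + 1/j/2 := by field_simp; ring
      have e2 : ((j:ℝ)+1)^2/2 * (1 - (((j:ℝ)+1)/j)⁻¹) = (j+1)/2 := by field_simp; ring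
      have e3 : 1/(j:ℝ) ≤ 1 := by rw [div_le_one hj0]; exact hj1
      rw [e1] at h1'
      rw [e2] at h2'
      rw [e]
      constructor <;> nlinarith [ih.1, ih.2]
  have := key n (by omega) le_rfl
  have hT := aux_T n 1 le_rfl (by omega)
  rw [div_self hn0.ne', log_one] at this
  have e : ∑ k ∈ Ico 1 n, (k:ℝ)/n * log ((k:ℝ)/n) = (∑ k ∈ Ico 1 n, (k:ℝ) * log ((k:ℝ)/n)) / n := by
    rw [sum_div]; exact sum_congr rfl fun _ _ => by ring
  have e2 : (∑ k ∈ Ico 1 n, (k:ℝ) * log ((k:ℝ)/n)) / n + n/4 = ((∑ k ∈ Ico 1 n, (k:ℝ) * log ((k:ℝ)/n)) + n^2/4)/n := by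
    field_simp
  rw [e, e2, abs_div, abs_of_pos hn0, div_le_iff₀ hn0]
  have l : log (1/(n:ℝ)) = - log n := by simp
  have l1 := Real.log_le_sub_one_of_pos hn0
  have l2 := Real.log_nonneg (by linarith : (1:ℝ) ≤ n)
  push_cast at hT
  rw [l] at this hT
  rw [abs_le]
  constructor <;> nlinarith [hT.1, hT.2, this.1, this.2]

lemma aux_fract (ℓ n k : ℕ) (hn : 2 ≤ n) (hk : k < n) (hl : 0 < ℓ) :
    Int.fract ((ℓ:ℝ) * k / n) = (ℓ:ℝ) * k / n - ∑ m ∈ Ico 1 ℓ, if m * n ≤ ℓ * k then (1:ℝ) else 0 := by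
  have e : ⌊(ℓ:ℝ) * k / n⌋ = ((ℓ * k / n : ℕ) : ℤ) := by
    have := Nat.floor_div_eq_div (K := ℝ) (ℓ * k) n
    rw [← this, Int.natCast_floor_eq_floor (by positivity)]
    push_cast; rfl
  rw [← Int.self_sub_floor, e, ← sum_filter, sum_const, nsmul_eq_mul, mul_one]
  have : (Ico 1 ℓ).filter (fun m => m * n ≤ ℓ * k) = Ico 1 (ℓ * k / n + 1) := by
    ext m
    have h1 : m ≤ ℓ * k / n ↔ m * n ≤ ℓ * k := Nat.le_div_iff_mul_le (by omega)
    have h2 : ℓ * k / n < ℓ := by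
      rw [Nat.div_lt_iff_lt_mul (by omega)]
      exact Nat.mul_lt_mul_of_pos_left hk hl
    simp only [mem_filter, mem_Ico, ← h1]
    omega
  rw [this, Nat.card_Ico, Nat.add_sub_cancel, Int.cast_natCast]

lemma aux_sum (ℓ : ℕ) (hl : 0 < ℓ) : ∑ m ∈ Ico 1 ℓ, (1 - (m:ℝ)/ℓ) = ((ℓ:ℝ)-1)/2 := by
  have hl0 : (0:ℝ) < ℓ := by exact_mod_cast hl
  have : ∀ j : ℕ, 1 ≤ j → ∑ m ∈ Ico 1 j, (1 - (m:ℝ)/ℓ) = ((j:ℝ)-1) - j*(j-1)/2/ℓ := by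
    intro j hj
    induction j, hj using Nat.le_induction with
    | base => simp
    | succ j hj ih => rw [sum_Ico_succ_top hj, ih]; push_cast; field_simp; ring
  rw [this ℓ hl]; field_simp; ring

lemma aux_first (ℓ : ℕ) (hl : 0 < ℓ) : ∃ C : ℝ, ∀ n : ℕ, 2 ≤ n →
      |(∑ k ∈ Finset.Ico 1 n, (2 * Int.fract ((ℓ : ℝ) * k / n) - 1) * Real.log (k / n))
          - ((ℓ : ℝ) / 2 + 2 * ∑ m ∈ Finset.Ico 1 ℓ, (m : ℝ) / ℓ * Real.log ((m : ℝ) / ℓ)) * n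
          + 1 / 2 * Real.log n| ≤ C := by
  obtain ⟨B, hB⟩ := aux_B
  refine ⟨2 * ℓ * 4 + B + 2 * ∑ m ∈ Ico 1 ℓ, 2 * |log ((m:ℝ)/ℓ)|, fun n hn => ?_⟩
  have hn0 : (0:ℝ) < n := by exact_mod_cast (by omega : 0 < n)
  have hl0 : (0:ℝ) < ℓ := by exact_mod_cast hl
  have hS : ∑ k ∈ Finset.Ico 1 n, (2 * Int.fract ((ℓ : ℝ) * k / n) - 1) * Real.log (k / n)
     = 2 * ℓ * (∑ k ∈ Ico 1 n, (k:ℝ)/n * log ((k:ℝ)/n)) - (∑ k ∈ Ico 1 n, log ((k:ℝ)/n))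
       - 2 * ∑ m ∈ Ico 1 ℓ, (∑ k ∈ Ico 1 n, if m * n ≤ ℓ * k then log ((k:ℝ)/n) else 0) := by
    rw [sum_comm, mul_sum, mul_sum, ← sum_sub_distrib, ← sum_sub_distrib]
    apply sum_congr rfl
    intro k hk
    rw [aux_fract ℓ n k hn (mem_Ico.mp hk).2 hl]
    have : (∑ m ∈ Ico 1 ℓ, if m * n ≤ ℓ * k then log ((k:ℝ)/n) else 0) = (∑ m ∈ Ico 1 ℓ, if m * n ≤ ℓ * k then (1:ℝ) else 0) * log ((k:ℝ)/n) := by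
      rw [sum_mul]; exact sum_congr rfl fun _ _ => by split_ifs <;> simp
    rw [this]; ring
  have hD : |∑ m ∈ Ico 1 ℓ, ((∑ k ∈ Ico 1 n, if m * n ≤ ℓ * k then log ((k:ℝ)/n) else 0) -
      (-n - (m * n / ℓ * log (m/ℓ) - m * n / ℓ)))| ≤ ∑ m ∈ Ico 1 ℓ, 2 * |log ((m:ℝ)/ℓ)| :=
    (abs_sum_le_sum_abs _ _).trans (sum_le_sum fun m hm => 
      aux_Tm ℓ m n (mem_Ico.mp hm).1 (mem_Ico.mp hm).2 hn)
  have hE : ∑ m ∈ Ico 1 ℓ, (-(n:ℝ) - (m * n / ℓ * log (m/ℓ) - m * n / ℓ)) = 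
     -n * (((ℓ:ℝ)-1)/2) - n * ∑ m ∈ Finset.Ico 1 ℓ, (m : ℝ) / ℓ * Real.log ((m : ℝ) / ℓ) := by
    rw [← aux_sum ℓ hl, mul_sum, mul_sum, ← sum_sub_distrib]
    exact sum_congr rfl fun _ _ => by ring
  rw [sum_sub_distrib, hE] at hD
  rw [hS]
  have hA := abs_le.mp (aux_A n hn)
  have hB := abs_le.mp (hB n hn)
  have hD := abs_le.mp hD
  have a1 := mul_le_mul_of_nonneg_left hA.1 hl0.le
  have a2 := mul_le_mul_of_nonneg_left hA.2 hl0.le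
  rw [abs_le]
  constructor <;> linarith [hB.1, hB.2, hD.1, hD.2]

lemma aux_second (ℓ : ℕ) (hl : 0 < ℓ) (n : ℕ) (hn : 2 ≤ n) :
    |(∑ k ∈ Finset.Ico 1 n, (2 * Int.fract ((ℓ : ℝ) * k / n) - 1) * Real.log (k / n)) + 
     (∑ k ∈ Finset.Ico 1 n, (2 * Int.fract (-((ℓ : ℝ) * k / n)) - 1) * Real.log (k / n))| ≤
     ∑ m ∈ Ico 1 ℓ, 2 * |log ((m:ℝ)/ℓ)| := by
  have hn0 : (0:ℝ) < n := by exact_mod_cast (by omega : 0 < n)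
  have hl0 : (0:ℝ) < ℓ := by exact_mod_cast hl
  rw [← sum_add_distrib]
  refine (abs_sum_le_sum_abs _ _).trans ?_
  have h1 : ∀ k ∈ Ico 1 n, |(2 * Int.fract ((ℓ : ℝ) * k / n) - 1) * Real.log (k / n) + (2 * Int.fract (-((ℓ : ℝ) * k / n)) - 1) * Real.log (k / n)| ≤ ∑ m ∈ Ico 1 ℓ, if m * n = ℓ * k then 2 * |log ((m:ℝ)/ℓ)| else 0 := by
    intro k hk
    have hk := mem_Ico.mp hk
    by_cases h : Int.fract ((ℓ : ℝ) * k / n) = 0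
    · have h' : Int.fract (-((ℓ : ℝ) * k / n)) = 0 := Int.fract_neg_eq_zero.mpr h
      rw [h, h']
      have hd : ((ℓ * k / n : ℕ) : ℝ) = (ℓ : ℝ) * k / n := by
        have e : ⌊(ℓ:ℝ) * k / n⌋ = ((ℓ * k / n : ℕ) : ℤ) := by
          have := Nat.floor_div_eq_div (K := ℝ) (ℓ * k) n
          rw [← this, Int.natCast_floor_eq_floor (by positivity)]
          push_cast; rfl
        have := Int.self_sub_floor ((ℓ:ℝ) * k / n)
        rw [h, e] at this
        rw [Int.cast_natCast] at this
        linarith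
      set m := ℓ * k / n with hm
      have hmn : m * n = ℓ * k := by
        rw [eq_div_iff hn0.ne'] at hd; exact_mod_cast hd
      have hmem : m ∈ Ico 1 ℓ := by
        rw [mem_Ico]
        constructor
        · by_contra hc
          have : m = 0 := Nat.lt_one_iff.mp (not_le.mp hc)
          rw [this, zero_mul] at hmn
          have := Nat.mul_pos hl hk.1
          omega
        · rw [hm, Nat.div_lt_iff_lt_mul (by omega)]
          exact Nat.mul_lt_mul_of_pos_left hk.2 hl
      have e : (m:ℝ)/ℓ = k/n := by
        rw [div_eq_div_iff hl0.ne' hn0.ne']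
        rw [mul_comm (k:ℝ)]; exact_mod_cast hmn
      refine le_trans ?_ (single_le_sum (f := fun m : ℕ => if m * n = ℓ * k then 2 * |log ((m:ℝ)/ℓ)| else 0) (fun i _ => by split_ifs <;> positivity) hmem)
      simp only [hmn, if_true, e]
      rw [show (2 * (0:ℝ) - 1) * log (k/n) + (2 * 0 - 1) * log (k/n) = -(2 * log (k/n)) by ring, abs_neg, abs_mul]
      norm_num
    · rw [Int.fract_neg h]
      rw [show (2 * Int.fract ((ℓ : ℝ) * k / n) - 1) * Real.log (k / n) + (2 * (1 - Int.fract (((ℓ : ℝ) * k / n))) - 1) * Real.log (k / n) = 0 by ring, abs_zero]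
      exact sum_nonneg fun i _ => by split_ifs <;> positivity
  refine (sum_le_sum h1).trans ?_
  rw [sum_comm]
  apply sum_le_sum
  intro m hm
  rw [← sum_filter, sum_const, nsmul_eq_mul]
  have hc : ((Ico 1 n).filter (fun k => m * n = ℓ * k)).card ≤ 1 := by
    rw [card_le_one]
    intro a ha b hb
    have ha := (mem_filter.mp ha).2
    have hb := (mem_filter.mp hb).2
    exact Nat.eq_of_mul_eq_mul_left hl (ha.symm.trans hb)
  have hc' : (((Ico 1 n).filter (fun k => m * n = ℓ * k)).card : ℝ) ≤ 1 := by exact_mod_cast hc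
  exact mul_le_of_le_one_left (by positivity) hc'

/-- Asymptotics of `Σ_{k=1}^{n-1} (2{±ℓk/n} - 1) log(k/n)` for a fixed positive
integer `ℓ`, with `a(ℓ) = ℓ/2 + 2 Σ_{m=1}^{ℓ-1} (m/ℓ) log(m/ℓ)`. -/
theorem sum_fract_log_asymp (ℓ : ℕ) (hℓ : 0 < ℓ) :
    ∃ C > (0 : ℝ), ∀ n : ℕ, 2 ≤ n →
      |(∑ k ∈ Finset.Ico 1 n, (2 * Int.fract ((ℓ : ℝ) * k / n) - 1) * Real.log (k / n))
          - ((ℓ : ℝ) / 2 + 2 * ∑ m ∈ Finset.Ico 1 ℓ, (m : ℝ) / ℓ * Real.log ((m : ℝ) / ℓ)) * n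
          + 1 / 2 * Real.log n| ≤ C ∧
      |(∑ k ∈ Finset.Ico 1 n, (2 * Int.fract (-((ℓ : ℝ) * k / n)) - 1) * Real.log (k / n))
          + ((ℓ : ℝ) / 2 + 2 * ∑ m ∈ Finset.Ico 1 ℓ, (m : ℝ) / ℓ * Real.log ((m : ℝ) / ℓ)) * n
          - 1 / 2 * Real.log n| ≤ C := by
  obtain ⟨C, hC⟩ := aux_first ℓ hℓ
  have hD0 : 0 ≤ ∑ m ∈ Ico 1 ℓ, 2 * |log ((m:ℝ)/ℓ)| := sum_nonneg fun _ _ => by positivity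
  refine ⟨|C| + (∑ m ∈ Ico 1 ℓ, 2 * |log ((m:ℝ)/ℓ)|) + 1, by positivity, fun n hn => ?_⟩
  have h1 := abs_le.mp (hC n hn)
  have h2 := abs_le.mp (aux_second ℓ hℓ n hn)
  have h3 := le_abs_self C
  constructor
  · rw [abs_le]
    constructor <;> linarith [h1.1, h1.2]
  · rw [abs_le]
    constructor <;> linarith [h1.1, h1.2, h2.1, h2.2]
end

section
/- Let p and q be positive integers and let d := gcd(p, q). Then ∫₀¹ ({p x} − {q x})²/x dx = −2(p − q)·∫₀¹ ({p x} − {q x})·log x dx − Σ_{k=1}^{p−1} (2{q k/p} − 1)·log(k/p) − Σ_{j=1}^{q−1} (2{p j/q} − 1)·log(j/q) − 2·Σ_{m=1}^{d−1} log(m/d). -/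
open MeasureTheory Real Finset

lemma aux_sum_s15 (a b : ℕ) (ha : 0 < a) (g : ℕ → ℝ) :
    ∑ i ∈ Finset.Ico 1 (a*b), (if a ∣ i then g i else 0) = ∑ k ∈ Finset.Ico 1 b, g (a*k) := by
  rw [← Finset.sum_filter]
  symm
  apply Finset.sum_bij (fun k _ => a * k)
  · intro k hk
    simp only [Finset.mem_Ico, Finset.mem_filter] at *
    exact ⟨⟨Nat.mul_pos ha hk.1, Nat.mul_lt_mul_of_pos_left hk.2 ha⟩, Dvd.intro _ rfl⟩
  · intro x _ y _ h
    exact Nat.eq_of_mul_eq_mul_left ha h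
  · intro i hi
    simp only [Finset.mem_Ico, Finset.mem_filter] at hi
    obtain ⟨⟨h1, h2⟩, k, rfl⟩ := hi
    refine ⟨k, ?_, rfl⟩
    simp only [Finset.mem_Ico]
    exact ⟨Nat.pos_of_ne_zero (by rintro rfl; simp at h1), Nat.lt_of_mul_lt_mul_left h2⟩
  · intros; rfl

lemma aux_fract_s15 (i p : ℕ) : Int.fract ((i:ℝ)/p) = (i:ℝ)/p - ((i/p : ℕ):ℝ) := by
  have : ⌊(i:ℝ)/p⌋ = ((i/p : ℕ):ℤ) := by
    rw [← Nat.floor_div_eq_div (K := ℝ), Int.natCast_floor_eq_floor (by positivity)]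
  rw [Int.fract, this, Int.cast_natCast]

lemma aux_floor (i p q : ℕ) (hp : 0 < p) (hq : 0 < q) (x : ℝ)
    (h1 : (i:ℝ)/(p*q) ≤ x) (h2 : x < ((i+1:ℕ):ℝ)/(p*q)) :
    Int.fract (p * x) = p * x - ((i/q : ℕ):ℝ) := by
  have hp' : (0:ℝ) < p := by exact_mod_cast hp
  have hq' : (0:ℝ) < q := by exact_mod_cast hq
  have : ⌊(p:ℝ)*x⌋ = ((i/q : ℕ):ℤ) := by
    rw [Int.floor_eq_iff]
    rw [div_le_iff₀ (by positivity)] at h1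
    rw [lt_div_iff₀ (by positivity)] at h2
    have h3 : ((q * (i/q) : ℕ):ℝ) ≤ i := by exact_mod_cast Nat.mul_div_le i q
    have h4 : ((i + 1 : ℕ):ℝ) ≤ ((q * (i/q+1) : ℕ) : ℝ) := by
      exact_mod_cast Nat.lt_mul_div_succ i hq
    rw [Int.cast_natCast]
    rw [Nat.cast_mul] at h3 h4
    rw [Nat.cast_succ] at h2 h4
    rw [Nat.cast_succ] at h4
    constructor
    · refine le_of_mul_le_mul_left ?_ hq'
      linarith
    · refine lt_of_mul_lt_mul_left ?_ hq'.le
      linarith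
  rw [Int.fract, this, Int.cast_natCast]

lemma aux_int1 (a b s c : ℝ) (ha : 0 ≤ a) (hab : a ≤ b) (hc : 0 < a ∨ c = 0) :
    IntervalIntegrable (fun x => (s*x-c)^2/x) volume a b := by
  rcases hc with h | rfl
  · apply ContinuousOn.intervalIntegrable
    rw [Set.uIcc_of_le hab]
    apply ContinuousOn.div (by fun_prop) (by fun_prop)
    intro x hx
    have := hx.1
    linarith
  · have : (fun x => (s*x-0)^2/x) = fun x => s^2*x := by
      ext x
      by_cases hx : x = 0
      · simp [hx]
      · field_simp; ring
    rw [this]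
    exact Continuous.intervalIntegrable (by fun_prop) _ _

lemma aux_int2 (a b s c : ℝ) :
    IntervalIntegrable (fun x => (s*x-c) * Real.log x) volume a b :=
  intervalIntegral.intervalIntegrable_log'.continuousOn_mul (by fun_prop)

lemma aux_eval (a b s c : ℝ) (ha : 0 ≤ a) (hab : a ≤ b) (hc : 0 < a ∨ c = 0) :
    (∫ x in a..b, (s*x-c)^2/x) + 2*s*(∫ x in a..b, (s*x-c) * Real.log x)
      = (s*b-c)^2 * Real.log b - (s*a-c)^2 * Real.log a := by
  rw [← intervalIntegral.integral_const_mul, ← intervalIntegral.integral_add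
    (aux_int1 a b s c ha hab hc) ((aux_int2 a b s c).const_mul _)]
  apply intervalIntegral.integral_eq_sub_of_hasDerivAt_of_le (f := fun x => (s*x-c)^2 * Real.log x) hab
  · rcases hc with h | rfl
    · apply ContinuousOn.mul (by fun_prop)
      apply Real.continuousOn_log.mono
      intro x hx
      have := hx.1
      simp; linarith
    · have : (fun x => (s*x-0)^2 * Real.log x) = fun x => s^2*x*(x * Real.log x) := by
        ext x; ring
      rw [this]
      exact (Continuous.mul (by fun_prop) Real.continuous_mul_log).continuousOn
  · intro x hx
    have hx0 : x ≠ 0 := by have := hx.1; linarith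
    have := ((((hasDerivAt_id x).const_mul s).sub_const c).pow 2).mul (Real.hasDerivAt_log hx0)
    have h2 : HasDerivAt (fun x => (s*x-c)^2 * Real.log x) _ x := this
    refine h2.congr_deriv ?_
    simp
    field_simp
    ring
  · exact (aux_int1 a b s c ha hab hc).add ((aux_int2 a b s c).const_mul _)

lemma aux_jump (p q i : ℕ) (hp : 0 < p) (hq : 0 < q) (L : ℝ) :
    (((p:ℝ)-q)*(((i+1:ℕ):ℝ)/(p*q)) - (((i/q:ℕ):ℝ) - ((i/p:ℕ):ℝ)))^2 * L
    - (((p:ℝ)-q)*(((i+1:ℕ):ℝ)/(p*q)) - ((((i+1)/q:ℕ):ℝ) - (((i+1)/p:ℕ):ℝ)))^2 * L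
    = - (if q ∣ i+1 then (2 * Int.fract (((i+1:ℕ):ℝ)/p) - 1) * L else 0)
      - (if p ∣ i+1 then (2 * Int.fract (((i+1:ℕ):ℝ)/q) - 1) * L else 0)
      - 2 * (if Nat.lcm p q ∣ i+1 then L else 0) := by
  have hp' : (0:ℝ) < p := by exact_mod_cast hp
  have hq' : (0:ℝ) < q := by exact_mod_cast hq
  have e : ((p:ℝ)-q)*(((i+1:ℕ):ℝ)/(p*q)) = ((i+1:ℕ):ℝ)/q - ((i+1:ℕ):ℝ)/p := by
    field_simp
  rw [e, aux_fract_s15, aux_fract_s15]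
  simp only [Nat.lcm_dvd_iff]
  have h1 := Nat.succ_div (a := i) (b := p)
  have h2 := Nat.succ_div (a := i) (b := q)
  by_cases hpi : p ∣ i+1 <;> by_cases hqi : q ∣ i+1
  · have a1 : ((i+1:ℕ):ℝ)/p = (((i+1)/p:ℕ):ℝ) := (Nat.cast_div hpi hp'.ne').symm
    have a2 : ((i+1:ℕ):ℝ)/q = (((i+1)/q:ℕ):ℝ) := (Nat.cast_div hqi hq'.ne').symm
    simp only [hpi, hqi, if_true, and_self] at h1 h2 ⊢
    rw [a1, a2, h1, h2, Nat.cast_succ, Nat.cast_succ]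
    ring
  · have a1 : ((i+1:ℕ):ℝ)/p = (((i+1)/p:ℕ):ℝ) := (Nat.cast_div hpi hp'.ne').symm
    simp only [hpi, hqi, if_true, if_false, and_false] at h1 h2 ⊢
    rw [a1, h1, h2, Nat.cast_succ (i/p), add_zero]
    ring
  · have a2 : ((i+1:ℕ):ℝ)/q = (((i+1)/q:ℕ):ℝ) := (Nat.cast_div hqi hq'.ne').symm
    simp only [hpi, hqi, if_true, if_false, false_and] at h1 h2 ⊢
    rw [a2, h1, h2, Nat.cast_succ, add_zero]
    ring
  · simp only [hpi, hqi, if_false, false_and] at h1 h2 ⊢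
    rw [h1, h2, add_zero, add_zero]
    ring

theorem integral_sq_fract_diff_div (p q : ℕ) (hp : 0 < p) (hq : 0 < q) :
    (∫ x in Set.Ioc (0 : ℝ) 1, (Int.fract (p * x) - Int.fract (q * x)) ^ 2 / x)
      = -2 * ((p : ℝ) - q) *
          (∫ x in Set.Ioc (0 : ℝ) 1, (Int.fract (p * x) - Int.fract (q * x)) * Real.log x)
        - ∑ k ∈ Finset.Ico 1 p, (2 * Int.fract ((q : ℝ) * k / p) - 1) * Real.log ((k : ℝ) / p)
        - ∑ j ∈ Finset.Ico 1 q, (2 * Int.fract ((p : ℝ) * j / q) - 1) * Real.log ((j : ℝ) / q)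
        - 2 * ∑ m ∈ Finset.Ico 1 (Nat.gcd p q),
            Real.log ((m : ℝ) / (Nat.gcd p q)) := by
  have hp' : (0:ℝ) < p := by exact_mod_cast hp
  have hq' : (0:ℝ) < q := by exact_mod_cast hq
  rw [← intervalIntegral.integral_of_le zero_le_one, ← intervalIntegral.integral_of_le zero_le_one]
  set s : ℝ := (p:ℝ) - q with hs
  set t : ℕ → ℝ := fun i => (i:ℝ)/(p*q) with ht
  set c : ℕ → ℝ := fun i => ((i/q:ℕ):ℝ) - ((i/p:ℕ):ℝ) with hc
  have t0 : t 0 = 0 := by simp [ht]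
  have tN : t (p*q) = 1 := by simp only [ht]; push_cast; field_simp
  have tnn : ∀ i, 0 ≤ t i := fun i => by simp only [ht]; positivity
  have tm : ∀ i, t i ≤ t (i+1) := fun i => by
    simp only [ht]; gcongr; simp
  have tc : ∀ i, 0 < t i ∨ c i = 0 := fun i => by
    rcases Nat.eq_zero_or_pos i with rfl | h
    · right; simp [hc]
    · left
      have : (0:ℝ) < i := by exact_mod_cast h
      simp only [ht]; positivity
  have key : ∀ i, ∀ x ∈ Set.Ioo (t i) (t (i+1)),
      Int.fract (p * x) - Int.fract (q * x) = s * x - c i := by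
    intro i x hx
    rw [aux_floor i p q hp hq x hx.1.le hx.2, aux_floor i q p hq hp x
      (by rw [mul_comm (q:ℝ)]; exact hx.1.le) (by rw [mul_comm (q:ℝ)]; exact hx.2)]
    simp only [hs, hc]; ring
  have E1 : ∀ i, Set.EqOn (fun x => (s*x - c i)^2/x)
      (fun x : ℝ => (Int.fract (p * x) - Int.fract (q * x)) ^ 2 / x)
      (Set.uIoo (t i) (t (i+1))) := by
    intro i x hx
    rw [Set.uIoo_of_le (tm i)] at hx
    simp only [key i x hx]
  have E2 : ∀ i, Set.EqOn (fun x => (s*x - c i)*Real.log x)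
      (fun x : ℝ => (Int.fract (p * x) - Int.fract (q * x)) * Real.log x)
      (Set.uIoo (t i) (t (i+1))) := by
    intro i x hx
    rw [Set.uIoo_of_le (tm i)] at hx
    simp only [key i x hx]
  have S1 := intervalIntegral.sum_integral_adjacent_intervals (a := t) (n := p*q) (μ := volume)
    (fun i _ => (aux_int1 _ _ s (c i) (tnn i) (tm i) (tc i)).congr_uIoo (E1 i))
  have S2 := intervalIntegral.sum_integral_adjacent_intervals (a := t) (n := p*q) (μ := volume)
    (fun i _ => (aux_int2 _ _ s (c i)).congr_uIoo (E2 i))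
  rw [t0, tN] at S1 S2
  have main : (∑ i ∈ Finset.range (p*q), ((s * t (i+1) - c i)^2 * Real.log (t (i+1))
      - (s * t i - c i)^2 * Real.log (t i)))
      = (∫ x in (0:ℝ)..1, (Int.fract (p * x) - Int.fract (q * x)) ^ 2 / x)
       + 2*s*(∫ x in (0:ℝ)..1, (Int.fract (p * x) - Int.fract (q * x)) * Real.log x) := by
    rw [← S1, ← S2, Finset.mul_sum, ← Finset.sum_add_distrib]
    refine Finset.sum_congr rfl fun i _ => ?_
    rw [← aux_eval _ _ s (c i) (tnn i) (tm i) (tc i), intervalIntegral.integral_congr_uIoo (E1 i),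
      intervalIntegral.integral_congr_uIoo (E2 i)]
  -- telescoping
  have tele := Finset.sum_range_sub (fun i => (s * t i - c i)^2 * Real.log (t i)) (p*q)
  simp only [t0, tN, Real.log_one, Real.log_zero, mul_zero, sub_zero] at tele
  have main2 : (∑ i ∈ Finset.range (p*q), ((s * t (i+1) - c i)^2 * Real.log (t (i+1))
      - (s * t i - c i)^2 * Real.log (t i)))
      = ∑ i ∈ Finset.range (p*q),
      (- (if q ∣ i+1 then (2 * Int.fract (((i+1:ℕ):ℝ)/p) - 1) * Real.log (t (i+1)) else 0)
      - (if p ∣ i+1 then (2 * Int.fract (((i+1:ℕ):ℝ)/q) - 1) * Real.log (t (i+1)) else 0)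
      - 2 * (if Nat.lcm p q ∣ i+1 then Real.log (t (i+1)) else 0)) := by
    refine (sub_zero _).symm.trans ?_
    refine (congrArg _ tele.symm).trans ?_
    rw [← Finset.sum_sub_distrib]
    refine Finset.sum_congr rfl fun i _ => ?_
    rw [← aux_jump p q i hp hq]
    ring
  have conv : ∀ g : ℕ → ℝ, g (p*q) = 0 →
      ∑ i ∈ Finset.range (p*q), g (i+1) = ∑ i ∈ Finset.Ico 1 (p*q), g i := by
    intro g hg
    obtain ⟨n, hn⟩ : ∃ n, p*q = n+1 := ⟨p*q-1, by have := Nat.mul_pos hp hq; omega⟩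
    rw [hn] at hg ⊢
    rw [Finset.sum_range_succ, hg, add_zero, Finset.sum_Ico_eq_sum_range]
    simp [add_comm]
  rw [main] at main2
  rw [Finset.sum_sub_distrib, Finset.sum_sub_distrib, Finset.sum_neg_distrib, ← Finset.mul_sum,
    conv (fun i => if q ∣ i then (2 * Int.fract ((i:ℝ)/p) - 1) * Real.log (t i) else 0)
      (by simp [tN]),
    conv (fun i => if p ∣ i then (2 * Int.fract ((i:ℝ)/q) - 1) * Real.log (t i) else 0)
      (by simp [tN]),
    conv (fun i => if Nat.lcm p q ∣ i then Real.log (t i) else 0) (by simp [tN])] at main2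
  have R2 := aux_sum_s15 p q hp (fun i => (2 * Int.fract ((i:ℝ)/q) - 1) * Real.log (t i))
  have R1 := aux_sum_s15 q p hq (fun i => (2 * Int.fract ((i:ℝ)/p) - 1) * Real.log (t i))
  have R3 := aux_sum_s15 (Nat.lcm p q) (Nat.gcd p q) (Nat.lcm_pos hp hq) (fun i => Real.log (t i))
  rw [mul_comm q p] at R1
  beta_reduce at R1 R2 R3
  rw [mul_comm (Nat.lcm p q), Nat.gcd_mul_lcm] at R3
  rw [R1, R2, R3] at main2
  have T1 : ∀ k : ℕ, t (q*k) = (k:ℝ)/p := fun k => by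
    simp only [ht]; push_cast; field_simp
  have T2 : ∀ k : ℕ, t (p*k) = (k:ℝ)/q := fun k => by
    simp only [ht]; push_cast; field_simp
  have T3 : ∀ k : ℕ, t (Nat.lcm p q*k) = (k:ℝ)/(Nat.gcd p q) := fun k => by
    have h1 : (0:ℝ) < Nat.gcd p q := by exact_mod_cast Nat.gcd_pos_of_pos_left q hp
    have h2 : (0:ℝ) < Nat.lcm p q := by exact_mod_cast Nat.lcm_pos hp hq
    have h3 : (p:ℝ)*q = Nat.gcd p q * Nat.lcm p q := by exact_mod_cast (Nat.gcd_mul_lcm p q).symm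
    simp only [ht]; rw [h3]; push_cast; field_simp
  simp only [T1, T2, T3, Nat.cast_mul] at main2
  linarith
end

section
/- Let f be a non-negative measurable function on [0,1] such that f is integrable on [0,1] and x ↦ f(x)/x is integrable in a neighbourhood of 0. Then ∫₀¹ f({t x})/x dx = (log t)·∫₀¹ f(x) dx + O(1) as t → +∞: there exist constants C > 0 and T > 1 such that |∫₀¹ f({t x})/x dx − (log t)·∫₀¹ f(x) dx| ≤ C for all t ≥ T. -/
open MeasureTheory Real

/-- If `f ≥ 0` is integrable on `[0,1]` and `f(x)/x` is integrable near `0`, then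
`∫₀¹ f({t x})/x dx = (log t) ∫₀¹ f + O(1)` as `t → +∞`. -/
theorem integral_fract_scaling (f : ℝ → ℝ) (hmeas : Measurable f)
    (hpos : ∀ x ∈ Set.Icc (0 : ℝ) 1, 0 ≤ f x)
    (hint : IntegrableOn f (Set.Icc (0 : ℝ) 1))
    (hint0 : ∃ ε > (0 : ℝ), IntegrableOn (fun x => f x / x) (Set.Ioc (0 : ℝ) ε)) :
    ∃ C > (0 : ℝ), ∃ T > (1 : ℝ), ∀ t ≥ T,
      |(∫ x in Set.Ioc (0 : ℝ) 1, f (Int.fract (t * x)) / x)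
        - Real.log t * ∫ x in Set.Ioc (0 : ℝ) 1, f x| ≤ C := by
  obtain ⟨ε, hε, hε0⟩ := hint0
  have hfr : ∀ x ∈ Set.Ioo (0:ℝ) 1, Int.fract x = x := fun x hx =>
    Int.fract_eq_self.2 ⟨hx.1.le, hx.2⟩
  have hh0 : ∀ y : ℝ, 0 ≤ f (Int.fract y) := fun y =>
    hpos _ ⟨Int.fract_nonneg y, (Int.fract_lt_one y).le⟩
  have hper : Function.Periodic (fun y : ℝ => f (Int.fract y)) 1 := by
    intro y; simp
  have hh01 : IntervalIntegrable (fun y : ℝ => f (Int.fract y)) volume 0 1 := by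
    rw [intervalIntegrable_iff_integrableOn_Ioo_of_le zero_le_one]
    refine (hint.mono_set Set.Ioo_subset_Icc_self).congr_fun ?_ measurableSet_Ioo
    intro x hx
    simp only [hfr x hx]
  have hhI : ∀ a b : ℝ, IntervalIntegrable (fun y : ℝ => f (Int.fract y)) volume a b :=
    fun a b => hper.intervalIntegrable₀ one_ne_zero hh01 a b
  set I : ℝ := ∫ x in Set.Ioc (0 : ℝ) 1, f x with hI
  have hI' : ∫ y in (0:ℝ)..1, f (Int.fract y) = I := by
    rw [intervalIntegral.integral_of_le zero_le_one, hI, integral_Ioc_eq_integral_Ioo,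
      integral_Ioc_eq_integral_Ioo]
    refine setIntegral_congr_fun measurableSet_Ioo ?_
    intro x hx
    simp only [hfr x hx]
  have hIk : ∀ a : ℝ, ∫ y in a..(a+1), f (Int.fract y) = I := by
    intro a
    rw [← hI', hper.intervalIntegral_add_eq a 0, zero_add]
  have hI0 : 0 ≤ I := by
    rw [← hI']
    exact intervalIntegral.integral_nonneg zero_le_one (fun y _ => hh0 y)
  set g : ℝ → ℝ := fun y => f (Int.fract y) / y with hg
  have hgpos : ∀ a b : ℝ, 0 < a → a ≤ b → IntervalIntegrable g volume a b := by
    intro a b ha hab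
    have : g = fun y => f (Int.fract y) * y⁻¹ := by
      funext y; simp [hg, div_eq_mul_inv]
    rw [this]
    refine (hhI a b).mul_continuousOn ?_
    refine continuousOn_id.inv₀ ?_
    intro x hx
    rw [Set.uIcc_of_le hab] at hx
    exact (lt_of_lt_of_le ha hx.1).ne'
  have hg0 : ∀ b : ℝ, 0 ≤ b → IntervalIntegrable g volume 0 b := by
    intro b hb
    have h1 : IntervalIntegrable g volume 0 (min ε (1/2)) := by
      have hm : 0 < min ε (1/2) := lt_min hε (by norm_num)
      rw [intervalIntegrable_iff_integrableOn_Ioc_of_le hm.le]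
      refine (hε0.mono_set (Set.Ioc_subset_Ioc_right (min_le_left _ _))).congr_fun ?_
        measurableSet_Ioc
      intro x hx
      have : x ≤ 1/2 := hx.2.trans (min_le_right _ _)
      simp only [hg, hfr x ⟨hx.1, by linarith⟩]
    have hm : 0 < min ε (1/2) := lt_min hε (by norm_num)
    have h2 := h1.trans (hgpos _ (max b (min ε (1/2))) hm (le_max_right _ _))
    refine h2.mono_set ?_
    rw [Set.uIcc_of_le hb, Set.uIcc_of_le (hb.trans (le_max_left _ _))]
    exact Set.Icc_subset_Icc_right (le_max_left _ _)
  have hgab : ∀ a b : ℝ, 0 ≤ a → 0 ≤ b → IntervalIntegrable g volume a b :=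
    fun a b ha hb => (hg0 a ha).symm.trans (hg0 b hb)
  have hgnn : ∀ y : ℝ, 0 ≤ y → 0 ≤ g y := fun y hy => div_nonneg (hh0 y) hy
  have hgm : ∀ a b : ℝ, 0 ≤ a → a ≤ b → ∫ y in (0:ℝ)..a, g y ≤ ∫ y in (0:ℝ)..b, g y := by
    intro a b ha hab
    rw [← intervalIntegral.integral_add_adjacent_intervals (hg0 a ha)
      (hgab a b ha (ha.trans hab))]
    have := intervalIntegral.integral_nonneg (μ := volume) hab
      (fun y hy => hgnn y (ha.trans hy.1))
    linarith
  set A : ℝ := ∫ y in (0:ℝ)..1, g y with hA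
  have hA0 : 0 ≤ A := intervalIntegral.integral_nonneg zero_le_one (fun y hy => hgnn y hy.1)
  have step : ∀ a : ℝ, 0 < a → I * (a+1)⁻¹ ≤ ∫ y in a..(a+1), g y ∧
      ∫ y in a..(a+1), g y ≤ I * a⁻¹ := by
    intro a ha
    have hab : a ≤ a + 1 := by linarith
    constructor
    · rw [← hIk a, ← intervalIntegral.integral_mul_const]
      refine intervalIntegral.integral_mono_on hab ((hhI _ _).mul_const _)
        (hgpos _ _ ha hab) ?_
      intro y hy
      have : 0 < y := lt_of_lt_of_le ha hy.1
      simp only [hg, div_eq_mul_inv]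
      exact mul_le_mul_of_nonneg_left (inv_anti₀ this hy.2) (hh0 y)
    · rw [← hIk a, ← intervalIntegral.integral_mul_const]
      refine intervalIntegral.integral_mono_on hab 
        (hgpos _ _ ha hab) ((hhI _ _).mul_const _) ?_
      intro y hy
      simp only [hg, div_eq_mul_inv]
      exact mul_le_mul_of_nonneg_left (inv_anti₀ ha hy.1) (hh0 y)
  have main : ∀ n : ℕ, I * ((harmonic (n+1) : ℚ) - 1 : ℝ) ≤ ∫ y in (0:ℝ)..((n:ℝ)+1), g y ∧
      ∫ y in (0:ℝ)..((n:ℝ)+1), g y ≤ A + I * ((harmonic n : ℚ) : ℝ) := by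
    intro n
    induction n with
    | zero => simp [harmonic_succ, ← hA, hA0]
    | succ n ih =>
      have hn : (0:ℝ) < (n:ℝ) + 1 := by positivity
      obtain ⟨s1, s2⟩ := step _ hn
      have e := intervalIntegral.integral_add_adjacent_intervals (hg0 _ hn.le)
        (hgpos _ ((n:ℝ)+1+1) hn (by linarith))
      have e1 : ((harmonic (n+1+1) : ℚ) : ℝ) = (harmonic (n+1) : ℚ) + ((n:ℝ)+1+1)⁻¹ := by
        rw [harmonic_succ (n+1)]; push_cast; ring
      have e2 : ((harmonic (n+1) : ℚ) : ℝ) = (harmonic n : ℚ) + ((n:ℝ)+1)⁻¹ := by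
        rw [harmonic_succ n]; push_cast; ring
      push_cast
      rw [← e, e1]
      constructor
      · linarith [ih.1]
      · rw [e2]; linarith [ih.2]
  refine ⟨A + I + 1, by linarith, 2, by norm_num, fun t ht => ?_⟩
  have ht0 : 0 < t := by linarith
  have hsub : ∫ x in Set.Ioc (0 : ℝ) 1, f (Int.fract (t * x)) / x = ∫ y in (0:ℝ)..t, g y := by
    rw [← intervalIntegral.integral_of_le zero_le_one]
    have e := intervalIntegral.integral_comp_mul_left (a := 0) (b := 1) g ht0.ne'
    have e3 : ∀ x : ℝ, f (Int.fract (t * x)) / x = t * g (t * x) := by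
      intro x
      simp only [hg]
      rw [mul_div_assoc', mul_div_mul_left _ _ ht0.ne']
    simp only [e3]
    rw [intervalIntegral.integral_const_mul, e, smul_eq_mul, mul_inv_cancel_left₀ ht0.ne']
    simp
  rw [hsub]
  obtain ⟨m, hm⟩ : ∃ m : ℕ, ⌊t⌋₊ = m + 1 :=
    Nat.exists_eq_succ_of_ne_zero (Nat.floor_pos.2 (by linarith)).ne'
  have f1 : ((m:ℝ)+1) ≤ t := by
    have := Nat.floor_le ht0.le
    rw [hm] at this; exact_mod_cast this
  have f2 : t ≤ (m:ℝ)+1+1 := by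
    have := (Nat.lt_floor_add_one t).le
    rw [hm] at this; exact_mod_cast this
  have u1 := hgm _ _ (by positivity) f1
  have u2 := hgm _ _ ht0.le f2
  have l1 := (main m).1
  have l2 := (main (m+1)).2
  push_cast at l2
  have k1 := log_add_one_le_harmonic (m+1)
  have k2 := harmonic_le_one_add_log (m+1)
  push_cast at k1 k2
  have k3 : Real.log t ≤ Real.log ((m:ℝ)+1+1) := Real.log_le_log ht0 f2
  have k4 : Real.log ((m:ℝ)+1) ≤ Real.log t := Real.log_le_log (by positivity) f1
  have v1 := mul_le_mul_of_nonneg_left (k3.trans k1) hI0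
  have v2 := mul_le_mul_of_nonneg_left (k2.trans (add_le_add_right k4 1)) hI0
  rw [abs_le]
  constructor <;> nlinarith
end

section
/- Let ν be an irrational real number. Then (1/a)·∫₀^a ({x} − {ν x})² dx converges to 1/6 as a → +∞. -/
open MeasureTheory Real Filter

lemma aux_ii {F : ℝ → ℂ} (hF : Measurable F) {C : ℝ} (hC : ∀ x, ‖F x‖ ≤ C) (a b : ℝ) :
    IntervalIntegrable F volume a b := by
  rw [intervalIntegrable_iff]
  exact Measure.integrableOn_of_bounded (M := C) (by simp) hF.aestronglyMeasurable
    (Eventually.of_forall hC)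

lemma aux_quasi {F : ℝ → ℂ} (hi : ∀ a b, IntervalIntegrable F volume a b) {T : ℝ} (hT : 0 < T)
    {w : ℂ} (hw : ‖w‖ = 1) (hF : ∀ x, F (x + T) = w * F x)
    (h : w ≠ 1 ∨ ∫ x in (0:ℝ)..T, F x = 0) :
    Tendsto (fun a : ℝ => (a : ℂ)⁻¹ * ∫ x in (0:ℝ)..a, F x) atTop (nhds 0) := by
  obtain ⟨c, hc⟩ : ∃ c : ℂ, (∫ x in (0:ℝ)..T, F x) = c - w * c := by
    rcases h with h | h
    · refine ⟨(∫ x in (0:ℝ)..T, F x) / (1 - w), ?_⟩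
      have : 1 - w ≠ 0 := sub_ne_zero.2 (Ne.symm h)
      field_simp
    · exact ⟨0, by simp [h]⟩
  have hP : ∀ a, (∫ x in (0:ℝ)..(a + T), F x) - c = w * ((∫ x in (0:ℝ)..a, F x) - c) := by
    intro a
    have h1 := intervalIntegral.integral_add_adjacent_intervals (hi 0 T) (hi T (a + T))
    have h2 : ∫ x in T..(a + T), F x = w * ∫ x in (0:ℝ)..a, F x := by
      rw [← intervalIntegral.integral_const_mul]
      simp_rw [← hF]
      rw [intervalIntegral.integral_comp_add_right]
      simp
    rw [← h1, h2, hc]; ring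
  have hcont : Continuous fun a : ℝ => ‖(∫ x in (0:ℝ)..a, F x) - c‖ :=
    ((intervalIntegral.continuous_primitive hi 0).sub continuous_const).norm
  have hper : Function.Periodic (fun a : ℝ => ‖(∫ x in (0:ℝ)..a, F x) - c‖) T := by
    intro a
    simp only [hP a, norm_mul, hw, one_mul]
  obtain ⟨B, hB⟩ := (hper.isBounded_of_continuous hT.ne' hcont).exists_norm_le
  have hB' : ∀ a, ‖∫ x in (0:ℝ)..a, F x‖ ≤ B + ‖c‖ := by
    intro a
    have := hB _ ⟨a, rfl⟩
    simp only [norm_norm] at this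
    have h3 := norm_le_norm_add_norm_sub' (∫ x in (0:ℝ)..a, F x) c
    linarith
  have hlim : Tendsto (fun a : ℝ => a⁻¹ * (B + ‖c‖)) atTop (nhds 0) := by
    simpa using tendsto_inv_atTop_zero.mul_const (B + ‖c‖)
  refine squeeze_zero_norm' ?_ hlim
  filter_upwards [eventually_gt_atTop 0] with a ha
  rw [norm_mul, norm_inv, Complex.norm_real, Real.norm_of_nonneg ha.le]
  exact mul_le_mul_of_nonneg_left (hB' a) (by positivity)

lemma aux_periodic {g : ℝ → ℝ} (hg : Measurable g) {C : ℝ} (hC : ∀ x, ‖g x‖ ≤ C)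
    (hp : Function.Periodic g 1) {ν : ℝ} (hν : ν ≠ 0) :
    Tendsto (fun a : ℝ => a⁻¹ * ∫ x in (0:ℝ)..a, g (ν * x)) atTop
      (nhds (∫ x in (0:ℝ)..1, g x)) := by
  set m := ∫ x in (0:ℝ)..1, g x with hm
  have hgm : Measurable fun x => g (ν * x) := hg.comp (measurable_const_mul ν)
  have hi : ∀ a b, IntervalIntegrable (fun x => g (ν * x)) volume a b := by
    intro a b
    rw [intervalIntegrable_iff]
    exact Measure.integrableOn_of_bounded (M := C) (by simp) hgm.aestronglyMeasurable
      (Eventually.of_forall fun x => hC _)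
  have hint : ∫ x in (0:ℝ)..|ν|⁻¹, g (ν * x) = |ν|⁻¹ * m := by
    rw [intervalIntegral.integral_comp_mul_left _ hν]
    rcases lt_or_gt_of_ne hν with h | h
    · rw [abs_of_neg h]
      have e : ν * (-ν)⁻¹ = -1 := by field_simp
      have h2 := hp.intervalIntegral_add_eq (-1) 0
      simp only [neg_add_cancel, zero_add] at h2
      rw [e, mul_zero, intervalIntegral.integral_symm, h2, ← hm]
      simp [inv_neg]
    · rw [abs_of_pos h, mul_inv_cancel₀ hν, mul_zero, smul_eq_mul]
  have hq := aux_quasi (F := fun x => ((g (ν * x) - m : ℝ) : ℂ)) (T := |ν|⁻¹) (w := 1)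
    (fun a b => aux_ii (C := C + |m|) (Complex.measurable_ofReal.comp (hgm.sub_const m)) (by
      intro x
      change ‖((g (ν * x) - m : ℝ) : ℂ)‖ ≤ _
      rw [Complex.norm_real]
      exact (norm_sub_le _ _).trans (by simpa using hC _)) a b)
    (by positivity) (by simp) (by
      intro x
      have : g (ν * (x + |ν|⁻¹)) = g (ν * x) := by
        rcases lt_or_gt_of_ne hν with h | h
        · rw [abs_of_neg h]
          have e : ν * (x + (-ν)⁻¹) = ν * x - 1 := by field_simp; ring
          rw [e, hp.sub_eq]
        · rw [abs_of_pos h]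
          have e : ν * (x + ν⁻¹) = ν * x + 1 := by field_simp
          rw [e, hp]
      simp [this]) (by
      right
      rw [intervalIntegral.integral_ofReal, intervalIntegral.integral_sub (hi _ _) (by simp), hint]
      simp)
  have hq2 : Tendsto (fun a : ℝ => a⁻¹ * ∫ x in (0:ℝ)..a, (g (ν * x) - m)) atTop (nhds 0) := by
    have := (Complex.continuous_re.tendsto _).comp hq
    simp only [Complex.zero_re] at this
    refine this.congr fun a => ?_
    rw [Function.comp_apply, intervalIntegral.integral_ofReal]
    rw [← Complex.ofReal_inv, ← Complex.ofReal_mul, Complex.ofReal_re]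
  have hq3 := hq2.add_const m
  rw [zero_add] at hq3
  refine hq3.congr' ?_
  filter_upwards [eventually_gt_atTop 0] with a ha
  rw [intervalIntegral.integral_sub (hi _ _) (by simp)]
  simp
  field_simp
  ring

/-- Centred fractional part. -/
noncomputable def cfr (x : ℝ) : ℝ := Int.fract x - 1 / 2

lemma cfr_meas : Measurable cfr := measurable_fract.sub_const _

lemma cfr_bd (x : ℝ) : ‖cfr x‖ ≤ 1 := by
  have h0 := Int.fract_nonneg x
  have h1 := Int.fract_lt_one x
  rw [Real.norm_eq_abs, abs_le]; unfold cfr; constructor <;> linarith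

lemma cfr_per : Function.Periodic cfr 1 := by
  intro x; simp [cfr]

lemma cfr_int (n : ℕ) : ∫ x in (0:ℝ)..1, cfr x ^ n = ∫ x in (0:ℝ)..1, (x - 1 / 2) ^ n := by
  rw [intervalIntegral.integral_of_le zero_le_one, intervalIntegral.integral_of_le zero_le_one,
    ← integral_Ico_eq_integral_Ioc, ← integral_Ico_eq_integral_Ioc]
  refine setIntegral_congr_fun measurableSet_Ico fun x hx => ?_
  simp only [cfr, Int.fract_eq_self.2 hx]

lemma cfr_int1 : ∫ x in (0:ℝ)..1, cfr x = 0 := by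
  have := cfr_int 1
  simp only [pow_one] at this
  rw [this, intervalIntegral.integral_sub (by simp) (by simp)]
  simp

lemma cfr_int2 : ∫ x in (0:ℝ)..1, cfr x ^ 2 = 1 / 12 := by
  rw [cfr_int 2, intervalIntegral.integral_comp_sub_right (fun x => x ^ 2)]
  simp; norm_num

/-- The lift of the centred fractional part to the circle. -/
noncomputable def cfl : UnitAddCircle → ℂ :=
  Function.Periodic.lift (f := fun x : ℝ => (cfr x : ℂ)) (c := 1) (by
    intro x; simp only [cfr_per x])

lemma cfl_coe (x : ℝ) : cfl (x : UnitAddCircle) = cfr x := rfl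

lemma cfl_bd (x : UnitAddCircle) : ‖cfl x‖ ≤ 1 := by
  obtain ⟨y, rfl⟩ := QuotientAddGroup.mk_surjective x
  have := cfl_coe y
  change ‖cfl (y : UnitAddCircle)‖ ≤ 1
  rw [this, Complex.norm_real]; exact cfr_bd y

lemma cfl_meas : Measurable cfl := by
  refine QuotientAddGroup.measurable_from_quotient.2 ?_
  exact Complex.measurable_ofReal.comp cfr_meas

lemma aux_approx {ε : ℝ} (hε : 0 < ε) : ∃ P ∈ Submodule.span ℂ (Set.range (@fourier 1)),
    ∫ x, ‖cfl x - P x‖ ≤ ε := by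
  have hint : Integrable cfl (volume : Measure UnitAddCircle) :=
    Integrable.of_bound cfl_meas.aestronglyMeasurable 1 (Eventually.of_forall cfl_bd)
  obtain ⟨φ, hφ, hφi⟩ := hint.exists_boundedContinuous_integral_sub_le (half_pos hε)
  have hmem : φ.toContinuousMap ∈ (Submodule.span ℂ (Set.range (@fourier 1))).topologicalClosure := by
    rw [span_fourier_closure_eq_top]; trivial
  obtain ⟨P, hP, hd⟩ := Metric.mem_closure_iff.1 hmem (ε / 2) (half_pos hε)
  refine ⟨P, hP, ?_⟩
  have hPi : Integrable P (volume : Measure UnitAddCircle) :=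
    P.continuous.integrable_of_hasCompactSupport (HasCompactSupport.of_compactSpace _)
  calc ∫ x, ‖cfl x - P x‖ ≤ ∫ x, (‖cfl x - φ x‖ + ε / 2) := by
        refine integral_mono (hint.sub hPi).norm ((hint.sub hφi).norm.add (integrable_const _)) ?_
        intro x
        have h1 := ContinuousMap.dist_apply_le_dist (f := φ.toContinuousMap) (g := P) x
        have h2 := norm_sub_le_norm_sub_add_norm_sub (cfl x) (φ x) (P x)
        rw [dist_eq_norm] at h1
        change ‖φ x - P x‖ ≤ _ at h1
        dsimp only
        linarith
    _ = (∫ x, ‖cfl x - φ x‖) + ε / 2 := by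
        have hn : Integrable (fun x => ‖cfl x - φ x‖) (volume : Measure UnitAddCircle) :=
          (hint.sub hφi).norm
        rw [integral_add hn (integrable_const _)]
        simp [Measure.real, UnitAddCircle.measure_univ]
    _ ≤ ε := by linarith

lemma aux_ii2 (ν : ℝ) (P : C(UnitAddCircle, ℂ)) (a b : ℝ) :
    IntervalIntegrable (fun x : ℝ => (cfr x : ℂ) * P ((ν * x : ℝ) : UnitAddCircle)) volume a b := by
  refine aux_ii (C := 1 * ‖P‖) ?_ ?_ a b
  · refine (Complex.measurable_ofReal.comp cfr_meas).mul ?_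
    exact P.continuous.measurable.comp (AddCircle.measurable_mk'.comp (measurable_const_mul ν))
  · intro x
    rw [norm_mul, Complex.norm_real]
    exact mul_le_mul (cfr_bd x) (P.norm_coe_le_norm _) (norm_nonneg _) zero_le_one

lemma aux_trig {ν : ℝ} (hν : Irrational ν) {P : C(UnitAddCircle, ℂ)}
    (hP : P ∈ Submodule.span ℂ (Set.range (@fourier 1))) :
    Tendsto (fun a : ℝ => (a : ℂ)⁻¹ * ∫ x in (0:ℝ)..a,
      (cfr x : ℂ) * P ((ν * x : ℝ) : UnitAddCircle)) atTop (nhds 0) := by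
  induction hP using Submodule.span_induction with
  | mem P h =>
    obtain ⟨k, rfl⟩ := h
    refine aux_quasi (aux_ii2 ν _) one_pos (w := fourier k ((ν : ℝ) : UnitAddCircle)) ?_ ?_ ?_
    · rw [fourier_apply]; exact Circle.norm_coe _
    · intro x
      rw [cfr_per x, mul_add, mul_one, AddCircle.coe_add]
      simp only [fourier_apply, smul_add, AddCircle.toCircle_add, Circle.coe_mul]
      ring
    · by_cases hk : k = 0
      · right
        subst hk
        simp only [fourier_zero, mul_one]
        rw [intervalIntegral.integral_ofReal, cfr_int1]; simp
      · left
        intro h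
        rw [fourier_coe_apply, Complex.exp_eq_one_iff] at h
        obtain ⟨n, hn⟩ := h
        have h2 : (2 * π * Complex.I : ℂ) ≠ 0 := Complex.two_pi_I_ne_zero
        have h3 : (k : ℂ) * ν = n := by
          apply mul_left_cancel₀ h2
          rw [mul_comm _ (n : ℂ), ← hn]; simp; ring
        have h4 : (k : ℝ) * ν = n := by exact_mod_cast h3
        exact (hν.intCast_mul hk).ne_int n h4
  | zero => simp
  | add P Q _ _ hP hQ =>
    have := hP.add hQ
    rw [add_zero] at this
    refine this.congr fun a => ?_
    rw [← mul_add, ← intervalIntegral.integral_add (aux_ii2 ν P _ _) (aux_ii2 ν Q _ _)]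
    simp only [ContinuousMap.add_apply, mul_add]
  | smul c P _ hP =>
    have := hP.const_mul c
    rw [mul_zero] at this
    refine this.congr fun a => ?_
    rw [mul_left_comm, ← intervalIntegral.integral_const_mul]
    simp only [ContinuousMap.smul_apply, smul_eq_mul, mul_left_comm]

lemma aux_corr {ν : ℝ} (hν : Irrational ν) :
    Tendsto (fun a : ℝ => a⁻¹ * ∫ x in (0:ℝ)..a, cfr x * cfr (ν * x)) atTop (nhds 0) := by
  rw [Metric.tendsto_nhds]
  intro ε hε
  obtain ⟨P, hP, hPε⟩ := aux_approx (show 0 < ε / 4 by linarith)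
  have h1 := aux_trig hν hP
  have hgm : Measurable fun x : ℝ => ‖cfl x - P x‖ :=
    ((cfl_meas.sub P.continuous.measurable).comp AddCircle.measurable_mk').norm
  have hgb : ∀ x : UnitAddCircle, ‖cfl x - P x‖ ≤ 1 + ‖P‖ := fun x =>
    (norm_sub_le _ _).trans (add_le_add (cfl_bd _) (P.norm_coe_le_norm _))
  have h2 := aux_periodic (g := fun x : ℝ => ‖cfl x - P x‖) hgm
    (C := 1 + ‖P‖) (fun x => by rw [norm_norm]; exact hgb _)
    (fun x => by
      have : ((x + 1 : ℝ) : UnitAddCircle) = x := AddCircle.coe_add_period 1 x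
      simp only [this]) hν.ne_zero
  have e := UnitAddCircle.intervalIntegral_preimage 0 (fun x => ‖cfl x - P x‖)
  rw [zero_add] at e
  rw [e] at h2
  have h2' := h2.eventually_lt_const (show _ < ε / 2 by linarith)
  have h1' := (Metric.tendsto_nhds.1 h1) (ε / 2) (by linarith)
  filter_upwards [h1', h2', eventually_gt_atTop 0] with a ha1 ha2 ha
  rw [dist_zero_right] at ha1 ⊢
  have i2 : IntervalIntegrable (fun x : ℝ => ‖cfl ((ν * x : ℝ) : UnitAddCircle) - P ((ν * x : ℝ) : UnitAddCircle)‖) volume 0 a := by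
    rw [intervalIntegrable_iff]
    exact Measure.integrableOn_of_bounded (M := 1 + ‖P‖) (by simp)
      (hgm.comp (measurable_const_mul ν)).aestronglyMeasurable
      (Eventually.of_forall fun x => by rw [norm_norm]; exact hgb _)
  have i1 : IntervalIntegrable (fun x : ℝ => ((cfr x * cfr (ν * x) : ℝ) : ℂ)) volume 0 a := by
    refine aux_ii (C := 1 * 1) (Complex.measurable_ofReal.comp
      (cfr_meas.mul (cfr_meas.comp (measurable_const_mul ν)))) ?_ _ _
    intro x
    change ‖((cfr x * cfr (ν * x) : ℝ) : ℂ)‖ ≤ _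
    rw [Complex.norm_real, norm_mul]
    exact mul_le_mul (cfr_bd x) (cfr_bd _) (norm_nonneg _) zero_le_one
  have key : ‖(∫ x in (0:ℝ)..a, ((cfr x * cfr (ν * x) : ℝ) : ℂ)) -
      ∫ x in (0:ℝ)..a, (cfr x : ℂ) * P ((ν * x : ℝ) : UnitAddCircle)‖ ≤
      ∫ x in (0:ℝ)..a, ‖cfl ((ν * x : ℝ) : UnitAddCircle) - P ((ν * x : ℝ) : UnitAddCircle)‖ := by
    rw [← intervalIntegral.integral_sub i1 (aux_ii2 ν P _ _)]
    refine intervalIntegral.norm_integral_le_of_norm_le ha.le ?_ i2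
    refine Eventually.of_forall fun x _ => ?_
    rw [cfl_coe, Complex.ofReal_mul, ← mul_sub, norm_mul, Complex.norm_real]
    exact mul_le_of_le_one_left (norm_nonneg _) (cfr_bd x)
  rw [intervalIntegral.integral_ofReal] at key
  rw [norm_mul, norm_inv, Complex.norm_real] at ha1
  rw [norm_mul, norm_inv]
  rw [Real.norm_of_nonneg ha.le] at ha1 ⊢
  have h3 := norm_le_norm_add_norm_sub' ((∫ x in (0:ℝ)..a, cfr x * cfr (ν * x) : ℝ) : ℂ)
    (∫ x in (0:ℝ)..a, (cfr x : ℂ) * P ((ν * x : ℝ) : UnitAddCircle))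
  rw [Complex.norm_real] at h3
  have h4 := mul_le_mul_of_nonneg_left (h3.trans (add_le_add_right key _)) (inv_pos.2 ha).le
  rw [mul_add] at h4
  linarith

/-- For irrational `ν`, `(1/a) ∫₀^a ({x} - {νx})² dx → 1/6` as `a → +∞`. -/
theorem average_sq_fract_diff_tendsto (ν : ℝ) (hν : Irrational ν) :
    Tendsto (fun a : ℝ =>
        (1 / a) * ∫ x in Set.Ioo (0 : ℝ) a, (Int.fract x - Int.fract (ν * x)) ^ 2)
      atTop (nhds (1 / 6)) := by
  have hb : ∀ x, ‖cfr x ^ 2‖ ≤ 1 := fun x => by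
    rw [norm_pow]; exact pow_le_one₀ (norm_nonneg _) (cfr_bd x)
  have hm : Measurable fun x => cfr x ^ 2 := cfr_meas.pow_const 2
  have hp : Function.Periodic (fun x => cfr x ^ 2) 1 := fun x => by simp only [cfr_per x]
  have hA := aux_periodic hm hb hp hν.ne_zero
  have hB := aux_periodic hm hb hp one_ne_zero
  have hC := (aux_corr hν).const_mul 2
  rw [cfr_int2] at hA hB
  have h := (hB.add hA).sub hC
  have e : (1 / 12 + 1 / 12 - 2 * 0 : ℝ) = 1 / 6 := by norm_num
  rw [e] at h
  refine h.congr' ?_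
  filter_upwards [eventually_gt_atTop 0] with a ha
  have ii : ∀ F : ℝ → ℝ, Measurable F → (∀ x, ‖F x‖ ≤ 1) → IntervalIntegrable F volume 0 a := by
    intro F hF hF1
    rw [intervalIntegrable_iff]
    exact Measure.integrableOn_of_bounded (M := 1) (by simp) hF.aestronglyMeasurable
      (Eventually.of_forall hF1)
  have i1 := ii _ hm hb
  have i2 := ii _ (hm.comp (measurable_const_mul ν)) (fun x => hb _)
  have i3 := ii (fun x => cfr x * cfr (ν * x))
    (cfr_meas.mul (cfr_meas.comp (measurable_const_mul ν))) (fun x => by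
      rw [norm_mul]
      exact mul_le_one₀ (cfr_bd x) (norm_nonneg _) (cfr_bd _))
  rw [← integral_Ioc_eq_integral_Ioo, ← intervalIntegral.integral_of_le ha.le]
  have e2 : ∀ x, (Int.fract x - Int.fract (ν * x)) ^ 2
      = cfr x ^ 2 + cfr (ν * x) ^ 2 - 2 * (cfr x * cfr (ν * x)) := by
    intro x; unfold cfr; ring
  simp_rw [e2, one_mul]
  have i2' : IntervalIntegrable (fun x => cfr (ν * x) ^ 2) volume 0 a := i2
  rw [intervalIntegral.integral_sub (i1.add i2') (i3.const_mul 2),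
    intervalIntegral.integral_add i1 i2', intervalIntegral.integral_const_mul]
  ring
end

section
/- Let ν be an irrational real number with ν > 1. Then (1/log a)·∫₀¹ ({a x} − {ν a x})²/x dx converges to 1/6 as a → +∞. -/
open MeasureTheory Real Filter

/-- the periodized second Bernoulli polynomial -/
noncomputable def bb2 (x : ℝ) : ℝ := Int.fract x ^ 2 - Int.fract x + 1 / 6

/-- the periodized third Bernoulli polynomial -/
noncomputable def bb3 (x : ℝ) : ℝ :=
  Int.fract x ^ 3 - 3 / 2 * Int.fract x ^ 2 + 1 / 2 * Int.fract x

noncomputable def hh (α s : ℝ) : ℝ := (Int.fract (α * s) - Int.fract s) ^ 2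

lemma cos_sum_aux (θ : ℝ) (N : ℕ) :
    2 * sin (θ / 2) * ∑ n ∈ Finset.range N, cos (n * θ) = sin ((N - 1 / 2) * θ) + sin (θ / 2) := by
  induction N with
  | zero =>
    simp
    rw [show 2⁻¹ * θ = θ / 2 by ring]; ring
  | succ k ih =>
    rw [Finset.sum_range_succ, mul_add, ih]
    push_cast
    rw [show ((k : ℝ) + 1 - 1 / 2) * θ = k * θ + θ / 2 by ring,
      show ((k : ℝ) - 1 / 2) * θ = k * θ - θ / 2 by ring, sin_add, sin_sub]
    ring

lemma cos_avg (θ : ℝ) (h : sin (θ / 2) ≠ 0) :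
    Tendsto (fun N : ℕ => (∑ n ∈ Finset.range N, cos (n * θ)) / N) atTop (nhds 0) := by
  have h1 : Tendsto (fun N : ℕ => (1 / |sin (θ / 2)|) / (N : ℝ)) atTop (nhds 0) :=
    tendsto_const_div_atTop_nhds_zero_nat _
  refine squeeze_zero_norm (fun N => ?_) h1
  rw [norm_div, Real.norm_eq_abs, Real.norm_eq_abs, Nat.abs_cast]
  gcongr
  have h2 := cos_sum_aux θ N
  rw [le_div_iff₀ (abs_pos.mpr h), ← abs_mul]
  have : (∑ n ∈ Finset.range N, cos (n * θ)) * sin (θ / 2)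
      = (sin ((N - 1 / 2) * θ) + sin (θ / 2)) / 2 := by rw [← h2]; ring
  rw [this, abs_le]
  constructor <;> linarith [sin_le_one ((N - 1 / 2) * θ), sin_le_one (θ / 2),
    neg_one_le_sin ((N - 1 / 2) * θ), neg_one_le_sin (θ / 2)]

lemma bb2_hasSum (x : ℝ) :
    HasSum (fun k : ℕ => 1 / (k : ℝ) ^ 2 * cos (2 * π * k * x)) (π ^ 2 * bb2 x) := by
  have h := hasSum_one_div_nat_pow_mul_cos (k := 1) one_ne_zero (x := Int.fract x)
    ⟨Int.fract_nonneg x, (Int.fract_lt_one x).le⟩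
  have h2 := bernoulliFun_two (Int.fract x)
  unfold bernoulliFun at h2
  simp only [mul_one] at h
  rw [h2] at h
  convert h using 1
  · ext k
    congr 1
    have : 2 * π * k * x = 2 * π * k * Int.fract x + ((k * ⌊x⌋ : ℤ) : ℝ) * (2 * π) := by
      push_cast
      nth_rewrite 1 [← Int.fract_add_floor x]
      ring
    rw [this, Real.cos_add_int_mul_two_pi]
  · unfold bb2
    rw [show ((Nat.factorial 2 : ℕ) : ℝ) = 2 by norm_num [Nat.factorial]]
    ring

lemma bb2_avg (α : ℝ) (hα : Irrational α) :
    Tendsto (fun N : ℕ => (∑ n ∈ Finset.range N, bb2 (α * n)) / N) atTop (nhds 0) := by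
  have key : ∀ N : ℕ, (∑ n ∈ Finset.range N, bb2 (α * n)) / N
      = (∑' k : ℕ, 1 / (k : ℝ) ^ 2 *
        ((∑ n ∈ Finset.range N, cos (n * (2 * π * k * α))) / N)) / π ^ 2 := by
    intro N
    have h1 : HasSum (fun k : ℕ => ∑ n ∈ Finset.range N, 1 / (k : ℝ) ^ 2 * cos (2 * π * k * (α * n)))
        (∑ n ∈ Finset.range N, π ^ 2 * bb2 (α * n)) :=
      hasSum_sum (fun n _ => bb2_hasSum (α * n))
    have h2 := (h1.div_const (N : ℝ)).tsum_eq
    rw [← Finset.mul_sum] at h2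
    have : (∑ n ∈ Finset.range N, bb2 (α * n)) / N
       = (π ^ 2 * ∑ n ∈ Finset.range N, bb2 (α * n)) / N / π ^ 2 := by
      field_simp
    rw [this, ← h2]
    congr 2
    ext k
    rw [← Finset.mul_sum, mul_div_assoc]
    congr 3
    ext n
    congr 1; ring
  have h0 : Tendsto (fun N : ℕ => ∑' k : ℕ, 1 / (k : ℝ) ^ 2 *
        ((∑ n ∈ Finset.range N, cos (n * (2 * π * k * α))) / N)) atTop
        (nhds (∑' k : ℕ, (0 : ℝ))) := by
    refine tendsto_tsum_of_dominated_convergence (bound := fun k : ℕ => 1 / (k : ℝ) ^ 2)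
      (Real.summable_one_div_nat_pow.mpr one_lt_two) ?_ ?_
    · intro k
      rcases Nat.eq_zero_or_pos k with rfl | hk
      · simp
      · have := cos_avg (2 * π * k * α) ?_
        · simpa only [mul_zero] using this.const_mul (1 / (k : ℝ) ^ 2)
        · intro h
          obtain ⟨m, hm⟩ := Real.sin_eq_zero_iff.mp h
          have : (m : ℝ) = k * α := by
            have : (m : ℝ) * π = (k * α) * π := by rw [hm]; ring
            exact mul_right_cancel₀ pi_ne_zero this
          exact (hα.natCast_mul hk.ne').ne_int m this.symm
    · refine Eventually.of_forall fun N k => ?_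
      rw [norm_mul, Real.norm_of_nonneg (by positivity : 0 ≤ 1 / (k : ℝ) ^ 2)]
      refine mul_le_of_le_one_right (by positivity) ?_
      rw [norm_div, Real.norm_of_nonneg (Nat.cast_nonneg N)]
      refine div_le_one_of_le₀ ?_ (Nat.cast_nonneg N)
      refine (norm_sum_le _ _).trans ?_
      refine (Finset.sum_le_card_nsmul _ _ 1 fun n _ => ?_).trans ?_
      · exact abs_cos_le_one _
      · simp
  simp only [tsum_zero] at h0
  simp_rw [key]
  simpa using h0.div_const (π ^ 2)

lemma bb2_cont : Continuous bb2 := by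
  have : ContinuousOn (fun x : ℝ => x ^ 2 - x + 1 / 6) (Set.Icc 0 1) := by fun_prop
  exact this.comp_fract'' (by norm_num)

lemma bb3_cont : Continuous bb3 := by
  have : ContinuousOn (fun x : ℝ => x ^ 3 - 3 / 2 * x ^ 2 + 1 / 2 * x) (Set.Icc 0 1) := by fun_prop
  exact this.comp_fract'' (by norm_num)

lemma bb3_bound (x : ℝ) : |bb3 x| ≤ 3 := by
  have h0 := Int.fract_nonneg x
  have h1 := (Int.fract_lt_one x).le
  unfold bb3
  have a := pow_nonneg h0 2
  have b := pow_nonneg h0 3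
  have c := pow_le_one₀ h0 h1 (n := 2)
  have d := pow_le_one₀ h0 h1 (n := 3)
  rw [abs_le]; constructor <;> linarith

lemma bb2_bound (x : ℝ) : |bb2 x| ≤ 3 := by
  have h0 := Int.fract_nonneg x
  have h1 := (Int.fract_lt_one x).le
  unfold bb2
  have a := pow_nonneg h0 2
  have c := pow_le_one₀ h0 h1 (n := 2)
  rw [abs_le]; constructor <;> linarith

lemma fract_deriv (x : ℝ) (h : ∀ m : ℤ, x ≠ m) : HasDerivAt (fun y : ℝ => Int.fract y) 1 x := by
  have h1 : HasDerivAt (fun y : ℝ => y - (⌊x⌋ : ℝ)) 1 x := (hasDerivAt_id x).sub_const _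
  refine h1.congr_of_eventuallyEq ?_
  have : Set.Ioo (⌊x⌋ : ℝ) (⌊x⌋ + 1) ∈ nhds x :=
    Ioo_mem_nhds (lt_of_le_of_ne (Int.floor_le x) (h _).symm) (Int.lt_floor_add_one x)
  filter_upwards [this] with y hy
  have : ⌊y⌋ = ⌊x⌋ := Int.floor_eq_iff.mpr ⟨hy.1.le, hy.2⟩
  rw [Int.fract, this]

lemma hh_meas (α : ℝ) : Measurable (hh α) := by
  unfold hh
  fun_prop

lemma hh_nonneg (α s : ℝ) : 0 ≤ hh α s := sq_nonneg _

lemma hh_le_one (α s : ℝ) : hh α s ≤ 1 := by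
  unfold hh
  rw [sq_le_one_iff_abs_le_one, abs_le]
  constructor <;> linarith [Int.fract_nonneg s, Int.fract_lt_one s, Int.fract_nonneg (α * s),
    Int.fract_lt_one (α * s)]

lemma hh_int (α a b : ℝ) : IntervalIntegrable (hh α) volume a b := by
  refine (intervalIntegrable_const (c := (1 : ℝ))).mono_fun (hh_meas α).aestronglyMeasurable ?_
  refine Eventually.of_forall fun s => ?_
  beta_reduce
  rw [Real.norm_of_nonneg (hh_nonneg α s)]
  simpa using hh_le_one α s

lemma hh_block (α : ℝ) (h0 : 0 < α) (n : ℕ) :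
    ∫ s in (n : ℝ)..((n + 1 : ℕ) : ℝ), hh α s = 1 / 6
      + (1 / (3 * α) + 1 / (3 * α ^ 2)) * (bb3 (α * (n + 1 : ℕ)) - bb3 (α * n))
      - (bb2 (α * n) + bb2 (α * (n + 1 : ℕ))) / (2 * α) := by
  set H : ℝ → ℝ := fun s => bb3 (α * s) / (3 * α) + s / 12 + (s - n - 1 / 2) ^ 3 / 3
    - 2 * ((s - n - 1 / 2) * bb2 (α * s) / (2 * α) - bb3 (α * s) / (6 * α ^ 2)) with hH
  have c2 := bb2_cont
  have c3 := bb3_cont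
  have hs : (Set.range (fun m : ℤ => (m : ℝ) / α)).Countable := Set.countable_range _
  rw [integral_eq_of_hasDerivAt_off_countable_of_le H (hh α) (by push_cast; linarith) hs
    (by fun_prop) ?_ (hh_int _ _ _)]
  · simp only [hH]
    push_cast
    field_simp
    ring
  · rintro x ⟨⟨hx1, hx2⟩, hx3⟩
    push_cast at hx2
    have hfx : Int.fract x = x - n := by
      have : ⌊x⌋ = n := Int.floor_eq_iff.mpr ⟨by exact_mod_cast hx1.le, by exact_mod_cast hx2⟩
      rw [Int.fract, this]; simp
    have hne : ∀ m : ℤ, α * x ≠ m := by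
      intro m hm
      exact hx3 ⟨m, by simp only; rw [← hm]; field_simp⟩
    have hf : HasDerivAt (fun s : ℝ => Int.fract (α * s)) α x := by
      have := (fract_deriv _ hne).comp x ((hasDerivAt_id x).const_mul α)
      simpa [Function.comp_def] using this
    have d2 : HasDerivAt (fun s => bb2 (α * s)) (2 * Int.fract (α * x) * α - α) x := by
      unfold bb2
      have := ((hf.pow 2).sub hf).add_const (1 / 6)
      refine HasDerivAt.congr_deriv this ?_
      push_cast
      ring
    have d3 : HasDerivAt (fun s => bb3 (α * s)) (3 * bb2 (α * x) * α) x := by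
      unfold bb3 bb2
      have := ((hf.pow 3).sub ((hf.pow 2).const_mul (3 / 2))).add (hf.const_mul (1 / 2))
      refine HasDerivAt.congr_deriv this ?_
      push_cast
      ring
    have d1 : HasDerivAt (fun s : ℝ => s - n - 1 / 2) 1 x :=
      ((hasDerivAt_id x).sub_const _).sub_const _
    have := (((d3.div_const (3 * α)).add ((hasDerivAt_id x).div_const 12)).add
      ((d1.pow 3).div_const 3)).sub
      ((((d1.mul d2).div_const (2 * α)).sub (d3.div_const (6 * α ^ 2))).const_mul 2)
    refine HasDerivAt.congr_deriv this ?_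
    unfold hh
    rw [hfx]
    simp only [bb2]
    field_simp
    push_cast
    ring

noncomputable def cc (α : ℝ) (n : ℕ) : ℝ := (∫ s in (n : ℝ)..((n + 1 : ℕ) : ℝ), hh α s) - 1 / 6

lemma cc_sum (α : ℝ) (h0 : 0 < α) (N : ℕ) :
    ∑ n ∈ Finset.range N, cc α n
      = (1 / (3 * α) + 1 / (3 * α ^ 2)) * (bb3 (α * N) - bb3 0)
        - (2 * ∑ n ∈ Finset.range N, bb2 (α * n) + bb2 (α * N) - bb2 0) / (2 * α) := by
  induction N with
  | zero => simp
  | succ k ih =>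
    rw [Finset.sum_range_succ, ih, Finset.sum_range_succ, cc, hh_block α h0]
    ring

lemma cc_avg (α : ℝ) (h0 : 0 < α) (hα : Irrational α) :
    Tendsto (fun N : ℕ => (∑ n ∈ Finset.range N, cc α n) / N) atTop (nhds 0) := by
  have bdd : ∀ f : ℕ → ℝ, (∀ n, |f n| ≤ 6) → Tendsto (fun N : ℕ => f N / N) atTop (nhds 0) := by
    intro f hf
    refine squeeze_zero_norm (fun N => ?_) (tendsto_const_div_atTop_nhds_zero_nat (6 : ℝ))
    rw [norm_div, Real.norm_of_nonneg (Nat.cast_nonneg N)]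
    gcongr
    exact hf N
  have h3 := bdd (fun N => bb3 (α * N) - bb3 0) (fun n => (abs_sub _ _).trans
    (by linarith [bb3_bound (α * n), bb3_bound 0]))
  have h2 := bdd (fun N => bb2 (α * N) - bb2 0) (fun n => (abs_sub _ _).trans
    (by linarith [bb2_bound (α * n), bb2_bound 0]))
  have h1 := bb2_avg α hα
  have := ((h3.const_mul (1 / (3 * α) + 1 / (3 * α ^ 2))).sub
    ((h1.const_mul 2).div_const (2 * α))).sub (h2.div_const (2 * α))
  simp only [mul_zero, zero_div, sub_zero] at this
  refine this.congr fun N => ?_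
  rw [cc_sum α h0]
  ring

lemma abel_sum (c : ℕ → ℝ) (N : ℕ) :
    ∑ n ∈ Finset.range N, c n / ((n : ℝ) + 1) = (∑ n ∈ Finset.range N, c n) / N
      + ∑ n ∈ Finset.range N, (∑ k ∈ Finset.range n, c k) / n * (1 / ((n : ℝ) + 1)) := by
  induction N with
  | zero => simp
  | succ k ih =>
    rw [Finset.sum_range_succ, ih, Finset.sum_range_succ, Finset.sum_range_succ]
    push_cast
    rcases Nat.eq_zero_or_pos k with rfl | hk
    · simp
    · have : (k : ℝ) ≠ 0 := by positivity
      have : (k : ℝ) + 1 ≠ 0 := by positivity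
      field_simp
      ring

lemma harm_eq (N : ℕ) : ((harmonic N : ℚ) : ℝ) = ∑ n ∈ Finset.range N, 1 / ((n : ℝ) + 1) := by
  unfold harmonic
  push_cast
  simp

lemma harm_atTop : Tendsto (fun N : ℕ => ∑ n ∈ Finset.range N, 1 / ((n : ℝ) + 1)) atTop atTop := by
  have h : Tendsto (fun N : ℕ => Real.log ((N + 1 : ℕ) : ℝ)) atTop atTop :=
    Real.tendsto_log_atTop.comp
      (tendsto_natCast_atTop_atTop.comp (tendsto_add_atTop_nat 1))
  refine tendsto_atTop_mono (fun N => ?_) h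
  rw [← harm_eq]
  exact log_add_one_le_harmonic N

lemma log_avg (c : ℕ → ℝ)
    (hc : Tendsto (fun N : ℕ => (∑ n ∈ Finset.range N, c n) / N) atTop (nhds 0)) :
    Tendsto (fun N : ℕ => (∑ n ∈ Finset.range N, c n / ((n : ℝ) + 1)) /
      ∑ n ∈ Finset.range N, 1 / ((n : ℝ) + 1)) atTop (nhds 0) := by
  have h1 : Tendsto (fun N : ℕ => (∑ n ∈ Finset.range N, c n) / N /
      ∑ n ∈ Finset.range N, 1 / ((n : ℝ) + 1)) atTop (nhds 0) := hc.div_atTop harm_atTop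
  have h2 : (fun n : ℕ => (∑ k ∈ Finset.range n, c k) / n * (1 / ((n : ℝ) + 1)))
      =o[atTop] (fun n : ℕ => 1 / ((n : ℝ) + 1)) := by
    have := ((Asymptotics.isLittleO_one_iff ℝ).mpr hc).mul_isBigO
      (Asymptotics.isBigO_refl (fun n : ℕ => 1 / ((n : ℝ) + 1)) atTop)
    simpa only [one_mul] using this
  have h3 := (h2.sum_range (fun n => by simp; positivity) harm_atTop).tendsto_div_nhds_zero
  have := h1.add h3
  rw [add_zero] at this
  refine this.congr fun N => ?_
  rw [abel_sum c N, add_div]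

lemma ww_nonneg (α s : ℝ) (hs : 0 ≤ s) : 0 ≤ hh α s / s := div_nonneg (hh_nonneg _ _) hs

lemma ww_le (α s : ℝ) (h0 : 0 < α) (h1 : α < 1) (hs : 0 < s) : hh α s / s ≤ 1 := by
  rw [div_le_one hs]
  rcases lt_or_ge s 1 with h | h
  · have e1 : Int.fract s = s := Int.fract_eq_self.mpr ⟨hs.le, h⟩
    have e2 : Int.fract (α * s) = α * s := Int.fract_eq_self.mpr ⟨by positivity, by nlinarith⟩
    unfold hh
    rw [e1, e2]
    have : (1 - α) ^ 2 ≤ 1 := by nlinarith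
    have h4 : s ^ 2 ≤ s := by nlinarith
    calc (α * s - s) ^ 2 = (1 - α) ^ 2 * s ^ 2 := by ring
      _ ≤ 1 * s := by gcongr
      _ = s := one_mul s
  · exact (hh_le_one α s).trans h

lemma ww_int (α : ℝ) (h0 : 0 < α) (h1 : α < 1) (a b : ℝ) (ha : 0 ≤ a) (hb : 0 ≤ b) :
    IntervalIntegrable (fun s => hh α s / s) volume a b := by
  refine (intervalIntegrable_const (c := (1 : ℝ))).mono_fun
    ((hh_meas α).div measurable_id).aestronglyMeasurable ?_
  refine (ae_restrict_iff' measurableSet_uIoc).mpr (Eventually.of_forall fun s hs => ?_)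
  have hs0 : 0 < s := lt_of_le_of_lt (le_min ha hb) hs.1
  beta_reduce
  rw [Real.norm_of_nonneg (ww_nonneg α s hs0.le)]
  simpa using ww_le α s h0 h1 hs0

lemma block_err (α : ℝ) (h0 : 0 < α) (h1 : α < 1) (n : ℕ) :
    |(∫ s in (n : ℝ)..((n + 1 : ℕ) : ℝ), hh α s / s)
      - (cc α n / ((n : ℝ) + 1) + 1 / 6 * (1 / ((n : ℝ) + 1)))| ≤ 2 * (1 / ((n : ℝ) + 1) ^ 2) := by
  have e : cc α n / ((n : ℝ) + 1) + 1 / 6 * (1 / ((n : ℝ) + 1))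
      = ∫ s in (n : ℝ)..((n + 1 : ℕ) : ℝ), hh α s / ((n : ℝ) + 1) := by
    rw [intervalIntegral.integral_div, cc]; ring
  rw [e, ← intervalIntegral.integral_sub (ww_int α h0 h1 _ _ (by positivity) (by positivity))
    ((hh_int α _ _).div_const _)]
  have := intervalIntegral.norm_integral_le_of_norm_le_const (a := (n : ℝ))
    (b := ((n + 1 : ℕ) : ℝ)) (C := 2 * (1 / ((n : ℝ) + 1) ^ 2))
    (f := fun s => hh α s / s - hh α s / ((n : ℝ) + 1)) ?_
  · simpa using this
  · intro s hs
    rw [Set.uIoc_of_le (by push_cast; linarith)] at hs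
    obtain ⟨hs1, hs2⟩ := hs
    push_cast at hs2
    have hn : (0 : ℝ) ≤ n := Nat.cast_nonneg n
    have hs0 : 0 < s := by linarith
    have hw := ww_nonneg α s hs0.le
    have hw1 := ww_le α s h0 h1 hs0
    have hh1 := hh_le_one α s
    have eq : hh α s = hh α s / s * s := by field_simp
    set w := hh α s / s
    have hw2 : w ≤ 2 / ((n : ℝ) + 1) := by
      rw [le_div_iff₀ (by positivity)]
      nlinarith
    have hE : w - hh α s / ((n : ℝ) + 1) = w * (((n : ℝ) + 1 - s) / ((n : ℝ) + 1)) := by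
      rw [eq]; field_simp
    rw [hE, Real.norm_of_nonneg (mul_nonneg hw (div_nonneg (by linarith) (by positivity)))]
    calc w * (((n : ℝ) + 1 - s) / ((n : ℝ) + 1))
        ≤ 2 / ((n : ℝ) + 1) * (1 / ((n : ℝ) + 1)) := by
          gcongr
          linarith
      _ = _ := by field_simp

lemma main_bound (α : ℝ) (h0 : 0 < α) (h1 : α < 1) : ∃ C : ℝ, ∀ A : ℝ, 1 ≤ A →
    |(∫ s in (0 : ℝ)..A, hh α s / s) - ∑ n ∈ Finset.range ⌊A⌋₊, cc α n / ((n : ℝ) + 1)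
      - 1 / 6 * Real.log A| ≤ C := by
  have hsum : Summable (fun n : ℕ => 2 * (1 / ((n : ℝ) + 1) ^ 2)) := by
    have := (summable_nat_add_iff 1).mpr (Real.summable_one_div_nat_pow.mpr one_lt_two)
    refine Summable.mul_left 2 ?_
    simpa using this
  refine ⟨(∑' n : ℕ, 2 * (1 / ((n : ℝ) + 1) ^ 2)) + 1 + 1, fun A hA => ?_⟩
  set N := ⌊A⌋₊ with hN
  have hNA : (N : ℝ) ≤ A := Nat.floor_le (by linarith)
  have hNA2 : A < N + 1 := Nat.lt_floor_add_one A
  have split : ∫ s in (0 : ℝ)..A, hh α s / s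
      = (∑ n ∈ Finset.range N, ∫ s in (n : ℝ)..((n + 1 : ℕ) : ℝ), hh α s / s)
        + ∫ s in (N : ℝ)..A, hh α s / s := by
    rw [intervalIntegral.sum_integral_adjacent_intervals (a := fun n : ℕ => (n : ℝ))
      (fun k _ => ww_int α h0 h1 _ _ (by positivity) (by positivity))]
    rw [Nat.cast_zero, intervalIntegral.integral_add_adjacent_intervals
      (ww_int α h0 h1 _ _ le_rfl (by positivity)) (ww_int α h0 h1 _ _ (by positivity) (by linarith))]
  have tail : |∫ s in (N : ℝ)..A, hh α s / s| ≤ 1 := by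
    have := intervalIntegral.norm_integral_le_of_norm_le_const (a := (N : ℝ))
      (b := A) (C := 1) (f := fun s => hh α s / s) ?_
    · refine this.trans ?_
      rw [one_mul, abs_of_nonneg] <;> linarith
    · intro s hs
      rw [Set.uIoc_of_le hNA] at hs
      have hn : (0 : ℝ) ≤ N := Nat.cast_nonneg N
      have hs0 : 0 < s := by linarith [hs.1]
      rw [Real.norm_of_nonneg (ww_nonneg α s hs0.le)]
      exact ww_le α s h0 h1 hs0
  have blocks : |∑ n ∈ Finset.range N, ((∫ s in (n : ℝ)..((n + 1 : ℕ) : ℝ), hh α s / s)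
      - (cc α n / ((n : ℝ) + 1) + 1 / 6 * (1 / ((n : ℝ) + 1))))|
      ≤ ∑' n : ℕ, 2 * (1 / ((n : ℝ) + 1) ^ 2) := by
    refine (Finset.abs_sum_le_sum_abs _ _).trans ?_
    refine (Finset.sum_le_sum fun n _ => block_err α h0 h1 n).trans ?_
    exact hsum.sum_le_tsum _ (fun n _ => by positivity)
  rw [Finset.sum_sub_distrib, Finset.sum_add_distrib, ← Finset.mul_sum, ← harm_eq] at blocks
  have l1 := log_le_harmonic_floor A (by linarith)
  have l2 := harmonic_floor_le_one_add_log A hA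
  rw [← hN] at l1 l2
  rw [split]
  rw [abs_le] at *
  constructor <;> linarith [blocks.1, blocks.2, tail.1, tail.2]

theorem log_average_sq_fract_diff_tendsto (ν : ℝ) (hν : 1 < ν) (hirr : Irrational ν) :
    Tendsto (fun a : ℝ =>
        (1 / Real.log a) *
          ∫ x in Set.Ioc (0 : ℝ) 1, (Int.fract (a * x) - Int.fract (ν * a * x)) ^ 2 / x)
      atTop (nhds (1 / 6)) := by
  have hν0 : 0 < ν := by linarith
  have h0 : 0 < ν⁻¹ := by positivity
  have h1 : ν⁻¹ < 1 := inv_lt_one_of_one_lt₀ hν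
  have hα : Irrational ν⁻¹ := hirr.inv
  obtain ⟨C, hC⟩ := main_bound ν⁻¹ h0 h1
  have hG := log_avg _ (cc_avg ν⁻¹ h0 hα)
  set G : ℕ → ℝ := fun N => ∑ n ∈ Finset.range N, cc ν⁻¹ n / ((n : ℝ) + 1) with hGdef
  have hA : Tendsto (fun a : ℝ => ν * a) atTop atTop := tendsto_id.const_mul_atTop hν0
  have hL : Tendsto (fun a : ℝ => Real.log a) atTop atTop := Real.tendsto_log_atTop
  have hratio : Tendsto (fun a : ℝ => Real.log (ν * a) / Real.log a) atTop (nhds 1) := by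
    have : Tendsto (fun a : ℝ => Real.log ν / Real.log a + 1) atTop (nhds (0 + 1)) :=
      (hL.const_div_atTop _).add_const 1
    rw [zero_add] at this
    refine this.congr' ?_
    filter_upwards [eventually_gt_atTop 1] with a ha
    have : Real.log a ≠ 0 := (Real.log_pos ha).ne'
    rw [Real.log_mul (by positivity) (by positivity)]
    field_simp
  -- harmonic over log stays bounded
  have hGl : Tendsto (fun a : ℝ => G ⌊ν * a⌋₊ / Real.log a) atTop (nhds 0) := by
    have hG2 := hG.comp (tendsto_nat_floor_atTop.comp hA)
    have hH : Tendsto (fun a : ℝ => ((harmonic ⌊ν * a⌋₊ : ℚ) : ℝ) / Real.log a) atTop (nhds 1) := by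
      have up : Tendsto (fun a : ℝ => 1 / Real.log a + Real.log (ν * a) / Real.log a) atTop
          (nhds (0 + 1)) := (hL.const_div_atTop 1).add hratio
      rw [zero_add] at up
      refine tendsto_of_tendsto_of_tendsto_of_le_of_le' hratio up ?_ ?_
      · filter_upwards [eventually_gt_atTop 1] with a ha
        have := Real.log_pos ha
        gcongr
        exact log_le_harmonic_floor _ (by positivity)
      · filter_upwards [eventually_gt_atTop 1] with a ha
        have := Real.log_pos ha
        rw [← add_div]
        gcongr
        exact harmonic_floor_le_one_add_log _ (by nlinarith)
    have := hG2.mul hH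
    rw [zero_mul] at this
    refine this.congr' ?_
    filter_upwards [eventually_gt_atTop 1] with a ha
    simp only [Function.comp]
    rw [← harm_eq]
    have hpos : 0 < ((harmonic ⌊ν * a⌋₊ : ℚ) : ℝ) :=
      lt_of_lt_of_le (Real.log_pos (by nlinarith)) (log_le_harmonic_floor (ν * a) (by positivity))
    exact div_mul_div_cancel₀ hpos.ne'
  have hmain : Tendsto (fun a : ℝ => ((∫ s in (0 : ℝ)..(ν * a), hh ν⁻¹ s / s) - G ⌊ν * a⌋₊
      - 1 / 6 * Real.log (ν * a)) / Real.log a) atTop (nhds 0) := by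
    refine squeeze_zero_norm' ?_ (hL.const_div_atTop C)
    filter_upwards [eventually_gt_atTop 1] with a ha
    have := Real.log_pos ha
    rw [norm_div, Real.norm_of_nonneg this.le]
    gcongr
    exact hC (ν * a) (by nlinarith)
  have := (hmain.add hGl).add (hratio.const_mul (1 / 6))
  simp only [zero_add, mul_one] at this
  refine this.congr' ?_
  filter_upwards [eventually_gt_atTop 1] with a ha
  have hI : ∫ x in Set.Ioc (0 : ℝ) 1, (Int.fract (a * x) - Int.fract (ν * a * x)) ^ 2 / x
      = ∫ s in (0 : ℝ)..(ν * a), hh ν⁻¹ s / s := by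
    have hc : ν * a ≠ 0 := by positivity
    have := intervalIntegral.mul_integral_comp_mul_left (a := 0) (b := 1)
      (f := fun s => hh ν⁻¹ s / s) (c := ν * a)
    rw [mul_zero, mul_one] at this
    rw [← this, ← intervalIntegral.integral_of_le zero_le_one,
      ← intervalIntegral.integral_const_mul]
    congr 1
    ext x
    unfold hh
    rw [show ν⁻¹ * (ν * a * x) = a * x by field_simp]
    rcases eq_or_ne x 0 with rfl | hx
    · simp
    · field_simp
  rw [hI]
  ring
end
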